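/- arXiv:2603.22067 — 2 statements merged into one kernel-verified Lean document; each statement's English description precedes it below -/
import Mathlib

section
/- Let 0 < d < n and let Ω ⊂ ℝⁿ be open with d-Ahlfors regular boundary with constant A. Let 0 < a < b. Then there is a constant C depending only on a, b, A, d and n such that for every Lebesgue-measurable F : Ω → ℝ and every λ > 0, σ({ξ ∈ ∂Ω : N_b F(ξ) > λ}) ≤ C·σ({ξ ∈ ∂Ω : N_a F(ξ) > λ}). Consequently, for every 1 ≤ q ≤ ∞ there is C' depending only on a, b, A, d, n, q such that ‖N_a F‖_{L^q(∂Ω,σ)} ≤ ‖N_b F‖_{L^q(∂Ω,σ)} ≤ C'·‖N_a F‖_{L^q(∂Ω,σ)}. -/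
open MeasureTheory Metric Set Filter
open scoped ENNReal NNReal Topology RealInnerProductSpace

noncomputable section

namespace Paper

/-- Euclidean space `ℝⁿ`. -/
abbrev Euc (n : ℕ) : Type := EuclideanSpace ℝ (Fin n)

variable {n : ℕ}

/-- `δ(x)`: the distance from `x` to the boundary of `Ω`. -/
def bd (Ω : Set (Euc n)) (x : Euc n) : ℝ := Metric.infDist x (frontier Ω)

/-- `σ`: the `d`-dimensional Hausdorff measure on `ℝⁿ`. -/
def hm (n : ℕ) (d : ℝ) : Measure (Euc n) := μH[d]

/-- `Γ ⊆ ℝⁿ` is `d`-Ahlfors regular with constant `A`: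
`(1/A) rᵈ ≤ σ(B(ξ,r) ∩ Γ) ≤ A rᵈ` for all `ξ ∈ Γ` and `0 < r ≤ diam Γ`. -/
def AhlforsRegular (d A : ℝ) (Γ : Set (Euc n)) : Prop :=
  Γ.Nonempty ∧ 0 < A ∧
    ∀ ξ ∈ Γ, ∀ r : ℝ, 0 < r → ENNReal.ofReal r ≤ EMetric.diam Γ →
      ENNReal.ofReal (r ^ d / A) ≤ hm n d (Metric.ball ξ r ∩ Γ) ∧
        hm n d (Metric.ball ξ r ∩ Γ) ≤ ENNReal.ofReal (A * r ^ d)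

/-- A `λ`-carrot path from `x ∈ ∂Ω` to `y ∈ Ω`: a rectifiable curve, parameterized by
arc length (hence `1`-Lipschitz), from `x` to `y`, staying in `Ω ∪ {x}`, with
`δ(ζ(t)) ≥ λ t`. -/
def IsCarrotPath (Ω : Set (Euc n)) (lam : ℝ) (x y : Euc n) : Prop :=
  ∃ (T : ℝ) (ζ : ℝ → Euc n), 0 ≤ T ∧ ζ 0 = x ∧ ζ T = y ∧
    LipschitzOnWith 1 ζ (Set.Icc 0 T) ∧
    (∀ t ∈ Set.Icc (0 : ℝ) T, ζ t ∈ Ω ∪ {x}) ∧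
    (∀ t ∈ Set.Icc (0 : ℝ) T, lam * t ≤ bd Ω (ζ t))

/-- `y ∈ Ω` is a `(θ,λ,N)`-weak local John point. -/
def IsWLJPoint (Ω : Set (Euc n)) (d θ lam N : ℝ) (y : Euc n) : Prop :=
  ∃ F : Set (Euc n), MeasurableSet F ∧
    F ⊆ Metric.ball y (N * bd Ω y) ∩ frontier Ω ∧
    ENNReal.ofReal θ * hm n d (Metric.ball y (N * bd Ω y) ∩ frontier Ω) ≤ hm n d F ∧
    ∀ x ∈ F, IsCarrotPath Ω lam x y

/-- The weak local John condition with specified parameters. -/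
def WeakLocalJohnWith (Ω : Set (Euc n)) (d θ lam N : ℝ) : Prop :=
  0 < θ ∧ θ ≤ 1 ∧ 0 < lam ∧ lam ≤ 1 ∧ 2 ≤ N ∧ ∀ y ∈ Ω, IsWLJPoint Ω d θ lam N y

/-- `Ω` is a weak local John domain. -/
def WeakLocalJohn (Ω : Set (Euc n)) (d : ℝ) : Prop :=
  ∃ θ lam N : ℝ, WeakLocalJohnWith Ω d θ lam N

/-- The interior corkscrew condition. -/
def InteriorCorkscrew (Ω : Set (Euc n)) : Prop :=
  ∃ ε : ℝ, 0 < ε ∧ ε < 1 ∧ ∀ x ∈ frontier Ω, ∀ r : ℝ, 0 < r →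
    ENNReal.ofReal r < EMetric.diam Ω →
    ∃ z : Euc n, z ∈ Metric.ball x r ∧ Metric.ball z (ε * r) ⊆ Ω

/-- The Harnack chain condition. -/
def HarnackChainCond (Ω : Set (Euc n)) : Prop :=
  ∃ (M m : ℝ) (Nf : ℝ → ℕ), 1 ≤ M ∧ 0 < m ∧ m < 1 ∧
    ∀ x ∈ Ω, ∀ y ∈ Ω,
      ∃ (N : ℕ) (c : Fin (N + 1) → Euc n) (r : Fin (N + 1) → ℝ),
        N ≤ Nf (dist x y / min (bd Ω x) (bd Ω y)) ∧
        x ∈ Metric.ball (c 0) (r 0) ∧ y ∈ Metric.ball (c (Fin.last N)) (r (Fin.last N)) ∧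
        (∀ i : Fin N,
          (Metric.ball (c i.castSucc) (r i.castSucc) ∩ Metric.ball (c i.succ) (r i.succ)).Nonempty) ∧
        ∀ i : Fin (N + 1), 0 < r i ∧ Metric.ball (c i) (r i) ⊆ Ω ∧
          m * (2 * r i) ≤ bd Ω (c i) - r i ∧ bd Ω (c i) - r i ≤ M * (2 * r i)

/-- The weighted ellipticity conditions
`λ δ(x)^{d+1-n} |ξ|² ≤ ξ·A(x)ξ` and `|η·A(x)ξ| ≤ Λ δ(x)^{d+1-n} |ξ||η|` on `Ω`. -/
def WeaklyElliptic (Ω : Set (Euc n)) (d lam Lam : ℝ)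
    (A : Euc n → Euc n →L[ℝ] Euc n) : Prop :=
  0 < lam ∧ lam ≤ Lam ∧ (∀ v : Euc n, Measurable fun x => A x v) ∧
    ∀ x ∈ Ω, ∀ ξ η : Euc n,
      lam * bd Ω x ^ (d + 1 - (n : ℝ)) * ‖ξ‖ ^ 2 ≤ ⟪ξ, A x ξ⟫ ∧
      |⟪η, A x ξ⟫| ≤ Lam * bd Ω x ^ (d + 1 - (n : ℝ)) * ‖ξ‖ * ‖η‖

/-- A test function on the open set `Ψ`: smooth, compactly supported, support inside `Ψ`. -/
def IsTestOn (Ψ : Set (Euc n)) (φ : Euc n → ℝ) : Prop :=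
  ContDiff ℝ (⊤ : ℕ∞) φ ∧ HasCompactSupport φ ∧ tsupport φ ⊆ Ψ

/-- `g` is the weak gradient of `u` on `Ψ`:
`∫_Ψ u ∂ᵥφ = −∫_Ψ ⟪g,v⟫ φ` for all test functions `φ` and directions `v`. -/
def HasWeakGradOn (u : Euc n → ℝ) (g : Euc n → Euc n) (Ψ : Set (Euc n)) : Prop :=
  LocallyIntegrableOn u Ψ volume ∧ LocallyIntegrableOn g Ψ volume ∧
    ∀ φ : Euc n → ℝ, IsTestOn Ψ φ → ∀ v : Euc n,
      (∫ x in Ψ, u x * fderiv ℝ φ x v) = -∫ x in Ψ, ⟪g x, v⟫ * φ x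

/-- Weak formulation of `− div A ∇u = − div H` in `Ψ`, where `g` is the weak gradient
of `u`. -/
def WeakSolOn (Ψ : Set (Euc n)) (A : Euc n → Euc n →L[ℝ] Euc n)
    (u : Euc n → ℝ) (g H : Euc n → Euc n) : Prop :=
  HasWeakGradOn u g Ψ ∧ LocallyIntegrableOn H Ψ volume ∧
    ∀ φ : Euc n → ℝ, IsTestOn Ψ φ →
      (∫ x in Ψ, ⟪gradient φ x, A x (g x)⟫) = ∫ x in Ψ, ⟪gradient φ x, H x⟫

/-- `Tr u(ξ) = 0` in the averaged sense: `r^{-n} ∫_{B(ξ,r)∩Ω} |u| → 0` as `r → 0⁺`. -/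
def TrZeroAt (Ω : Set (Euc n)) (u : Euc n → ℝ) (ξ : Euc n) : Prop :=
  Tendsto (fun r : ℝ => (1 / r ^ n) * ∫ x in Metric.ball ξ r ∩ Ω, |u x|)
    (𝓝[>] 0) (𝓝 0)

/-- The Whitney average `W_{c,β} f (y) = (⨍_{B(y, c δ(y))} |f|^β)^{1/β}`
(essential supremum if `β = ∞`), as an extended nonnegative real. -/
def wAvg (Ω : Set (Euc n)) (c : ℝ) (β : ℝ≥0∞) {F : Type*} [NormedAddCommGroup F]
    (f : Euc n → F) (y : Euc n) : ℝ≥0∞ :=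
  eLpNorm f β
    ((volume (Metric.ball y (c * bd Ω y)))⁻¹ • volume.restrict (Metric.ball y (c * bd Ω y)))

/-- The weighted averaged norm `‖f‖_{L^p_{av,c,β,s}(Ψ;Ω)}`:
`(∫_Ψ (W_{c,β}f)^p δ^{d-n+p-ps})^{1/p}`, `sup_Ψ (W_{c,β}f) δ^{1-s}` if `p = ∞`. -/
def avNormOn (Ω Ψ : Set (Euc n)) (d c : ℝ) (β p : ℝ≥0∞) (s : ℝ)
    {F : Type*} [NormedAddCommGroup F] (f : Euc n → F) : ℝ≥0∞ :=
  if p = ⊤ then ⨆ y ∈ Ψ, wAvg Ω c β f y * ENNReal.ofReal (bd Ω y) ^ (1 - s)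
  else (∫⁻ y in Ψ, wAvg Ω c β f y ^ p.toReal *
      ENNReal.ofReal (bd Ω y) ^ (d - n + p.toReal - p.toReal * s)) ^ (1 / p.toReal)

/-- The weighted averaged norm `‖f‖_{L^p_{av,c,β,s}(Ω)}`. -/
def avNorm (Ω : Set (Euc n)) (d c : ℝ) (β p : ℝ≥0∞) (s : ℝ)
    {F : Type*} [NormedAddCommGroup F] (f : Euc n → F) : ℝ≥0∞ :=
  avNormOn Ω Ω d c β p s f

/-- `f ∈ L^β_loc(Ω)`. -/
def MemLLoc (Ω : Set (Euc n)) (β : ℝ≥0∞) {F : Type*} [NormedAddCommGroup F]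
    (f : Euc n → F) : Prop :=
  AEStronglyMeasurable f (volume.restrict Ω) ∧
    ∀ K : Set (Euc n), K ⊆ Ω → IsCompact K → eLpNorm f β (volume.restrict K) < ⊤

/-- The nontangential cone `γ_a(ξ) = {x ∈ Ω : |x − ξ| < (1+a) δ(x)}`. -/
def ntCone (Ω : Set (Euc n)) (a : ℝ) (ξ : Euc n) : Set (Euc n) :=
  {x | x ∈ Ω ∧ dist x ξ < (1 + a) * bd Ω x}

/-- The nontangential maximal function `N_a f (ξ) = esssup_{γ_a(ξ)} |f|`. -/
def ntMax (Ω : Set (Euc n)) (a : ℝ) {F : Type*} [NormedAddCommGroup F]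
    (f : Euc n → F) (ξ : Euc n) : ℝ≥0∞ :=
  essSup (fun x => (‖f x‖₊ : ℝ≥0∞)) (volume.restrict (ntCone Ω a ξ))

/-- The `L^q` norm of an `ℝ≥0∞`-valued function. -/
def lqNormE (q : ℝ≥0∞) {α : Type*} [MeasurableSpace α] (μ : Measure α)
    (f : α → ℝ≥0∞) : ℝ≥0∞ :=
  if q = ⊤ then essSup f μ else (∫⁻ x, f x ^ q.toReal ∂μ) ^ (1 / q.toReal)

/-- `Tr_{a,c} u (x) = U`: `x` is in the closure of its nontangential cone, and the
Whitney averages of `|u − U|` tend to `0` nontangentially. -/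
def HasNTTrace (Ω : Set (Euc n)) (a c : ℝ) (u : Euc n → ℝ) (x : Euc n) (U : ℝ) : Prop :=
  x ∈ closure (ntCone Ω a x) ∧
    Tendsto (fun y => wAvg Ω c 1 (fun z => u z - U) y) (𝓝[ntCone Ω a x] x) (𝓝 0)

/-- The upper Ahlfors bound holds at all scales, with a constant depending only on `n`, `A`. -/
theorem exists_forall_hm_ball_inter_le (n : ℕ) {d A : ℝ} (hd : 0 < d) (hA : 0 < A) :
    ∃ N : ℝ, 0 < N ∧ ∀ Γ : Set (Euc n), AhlforsRegular d A Γ → 0 < Metric.ediam Γ →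
      ∀ ξ ∈ Γ, ∀ r : ℝ, 0 < r → hm n d (ball ξ r ∩ Γ) ≤ ENNReal.ofReal (N * r ^ d) := by
  obtain ⟨t, -, htf, ht⟩ :=
    (isCompact_closedBall (0 : Euc n) 1).finite_cover_balls (e := 1 / 2) (by norm_num)
  lift t to Finset (Euc n) using htf
  refine ⟨((t.card : ℝ) + 1) * A, by positivity, fun Γ hΓ hpos ξ hξ r hr => ?_⟩
  have hreg := hΓ.2.2
  by_cases hrD : ENNReal.ofReal r ≤ Metric.ediam Γ
  · refine (hreg ξ hξ r hr hrD).2.trans (ENNReal.ofReal_le_ofReal ?_)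
    have : 0 ≤ (t.card : ℝ) * (A * r ^ d) := by positivity
    linarith
  push Not at hrD
  have htop : Metric.ediam Γ ≠ ⊤ := (hrD.trans ENNReal.ofReal_lt_top).ne
  set D : ℝ := (Metric.ediam Γ).toReal
  have hD : 0 < D := ENNReal.toReal_pos hpos.ne' htop
  have hDr : D ≤ r := by
    have := ENNReal.toReal_mono ENNReal.ofReal_ne_top hrD.le
    rwa [ENNReal.toReal_ofReal hr.le] at this
  have hDe : ENNReal.ofReal D ≤ Metric.ediam Γ := by rw [ENNReal.ofReal_toReal htop]
  have hcov : Γ ⊆ ⋃ z ∈ t, ball (ξ + D • z) (D / 2) ∩ Γ := by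
    intro η hη
    have hdist : dist η ξ ≤ D := Metric.dist_le_diam_of_mem' htop hη hξ
    have hmem : D⁻¹ • (η - ξ) ∈ closedBall (0 : Euc n) 1 := by
      rw [mem_closedBall_zero_iff, norm_smul, ← dist_eq_norm, norm_inv, Real.norm_eq_abs,
        abs_of_pos hD, inv_mul_le_iff₀ hD]
      linarith
    obtain ⟨z, hz, hzd⟩ := mem_iUnion₂.1 (ht hmem)
    refine mem_iUnion₂.2 ⟨z, hz, ?_, hη⟩
    rw [mem_ball, dist_eq_norm] at hzd ⊢
    have : η - (ξ + D • z) = D • (D⁻¹ • (η - ξ) - z) := by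
      rw [smul_sub, smul_inv_smul₀ hD.ne']; abel
    rw [this, norm_smul, Real.norm_eq_abs, abs_of_pos hD]
    nlinarith
  have hpiece : ∀ z ∈ t, hm n d (ball (ξ + D • z) (D / 2) ∩ Γ) ≤ ENNReal.ofReal (A * D ^ d) := by
    intro z _
    rcases (ball (ξ + D • z) (D / 2) ∩ Γ).eq_empty_or_nonempty with h | ⟨η, hη, hηΓ⟩
    · simp [h]
    · refine (measure_mono (inter_subset_inter_left _ ?_)).trans (hreg η hηΓ D hD hDe).2
      refine ball_subset_ball' ?_
      rw [mem_ball, dist_comm] at hη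
      linarith
  calc hm n d (ball ξ r ∩ Γ) ≤ hm n d (⋃ z ∈ t, ball (ξ + D • z) (D / 2) ∩ Γ) :=
        measure_mono (inter_subset_right.trans hcov)
    _ ≤ ∑ z ∈ t, hm n d (ball (ξ + D • z) (D / 2) ∩ Γ) := measure_biUnion_finset_le _ _
    _ ≤ ∑ z ∈ t, ENNReal.ofReal (A * D ^ d) := Finset.sum_le_sum hpiece
    _ = ENNReal.ofReal (t.card * (A * D ^ d)) := by
        rw [Finset.sum_const, nsmul_eq_mul, ENNReal.ofReal_mul (p := (t.card : ℝ)) (by positivity),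
          ENNReal.ofReal_natCast]
    _ ≤ ENNReal.ofReal ((t.card + 1) * A * r ^ d) := by
        refine ENNReal.ofReal_le_ofReal ?_
        have h1 : D ^ d ≤ r ^ d := Real.rpow_le_rpow hD.le hDr hd.le
        have h2 : 0 ≤ D ^ d := by positivity
        calc (t.card : ℝ) * (A * D ^ d) ≤ (t.card + 1) * (A * D ^ d) := by gcongr; linarith
          _ ≤ (t.card + 1) * (A * r ^ d) := by gcongr
          _ = _ := by ring

/-- Enlarging a family of balls centred on an Ahlfors regular set by a fixed factor increases
the measure of the union by at most a constant factor. -/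
theorem hm_inter_biUnion_ball_le {d A N K : ℝ} {Γ : Set (Euc n)} (hd : 0 < d) (hN : 0 < N)
    (hK : 0 < K) (hΓ : AhlforsRegular d A Γ) (hΓm : MeasurableSet Γ)
    (hup : ∀ ξ ∈ Γ, ∀ r : ℝ, 0 < r → hm n d (ball ξ r ∩ Γ) ≤ ENNReal.ofReal (N * r ^ d))
    {ι : Type*} (V : Set ι) (z : ι → Euc n) (ρ : ι → ℝ) (hz : ∀ i ∈ V, z i ∈ Γ)
    (hρ : ∀ i ∈ V, 0 < ρ i) (hρD : ∀ i ∈ V, ENNReal.ofReal (ρ i) ≤ Metric.ediam Γ) :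
    hm n d (Γ ∩ ⋃ i ∈ V, ball (z i) (K * ρ i)) ≤
      ENNReal.ofReal (N * A * (3 + 2 * K) ^ d) * hm n d (Γ ∩ ⋃ i ∈ V, ball (z i) (ρ i)) := by
  have hA := hΓ.2.1
  have hreg := hΓ.2.2
  set C := N * A * (3 + 2 * K) ^ d with hC
  have hCpos : 0 < C := by positivity
  have hlow : ∀ i ∈ V, ENNReal.ofReal (ρ i ^ d / A) ≤ hm n d (ball (z i) (ρ i) ∩ Γ) :=
    fun i hi => (hreg (z i) (hz i hi) (ρ i) (hρ i hi) (hρD i hi)).1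
  by_cases hbdd : ∃ R, ∀ i ∈ V, ρ i ≤ R
  · obtain ⟨R, hR⟩ := hbdd
    obtain ⟨u, huV, hdisj, hu⟩ := Vitali.exists_disjoint_subfamily_covering_enlargement
      (fun i => ball (z i) (ρ i)) V ρ 2 one_lt_two (fun i hi => (hρ i hi).le) R hR
      (fun i hi => nonempty_ball.2 (hρ i hi))
    have hcount : u.Countable := hdisj.countable_of_isOpen (fun _ _ => isOpen_ball)
      (fun i hi => nonempty_ball.2 (hρ i (huV hi)))
    have hcov : Γ ∩ ⋃ i ∈ V, ball (z i) (K * ρ i) ⊆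
        ⋃ i ∈ u, ball (z i) ((3 + 2 * K) * ρ i) ∩ Γ := by
      rintro η ⟨hη, hη'⟩
      obtain ⟨i, hi, hηi⟩ := mem_iUnion₂.1 hη'
      obtain ⟨j, hj, ⟨y, hyi, hyj⟩, hij⟩ := hu i hi
      refine mem_iUnion₂.2 ⟨j, hj, ?_, hη⟩
      rw [mem_ball] at *
      have h1 := dist_triangle4 η (z i) y (z j)
      rw [dist_comm (z i) y] at h1
      have h2 : K * ρ i ≤ K * (2 * ρ j) := by gcongr
      linarith
    have hpiece : ∀ i ∈ u, hm n d (ball (z i) ((3 + 2 * K) * ρ i) ∩ Γ) ≤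
        ENNReal.ofReal C * hm n d (ball (z i) (ρ i) ∩ Γ) := by
      intro i hi
      have hi' := huV hi
      have hp := hρ i hi'
      refine (hup (z i) (hz i hi') _ (by positivity)).trans ?_
      refine le_trans ?_ (mul_le_mul_right (hlow i hi') _)
      rw [← ENNReal.ofReal_mul hCpos.le]
      refine ENNReal.ofReal_le_ofReal (le_of_eq ?_)
      rw [Real.mul_rpow (by positivity) hp.le, hC]
      field_simp
    have := hcount.to_subtype
    calc _ ≤ hm n d (⋃ i ∈ u, ball (z i) ((3 + 2 * K) * ρ i) ∩ Γ) := measure_mono hcov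
      _ ≤ ∑' i : u, hm n d (ball (z i) ((3 + 2 * K) * ρ i) ∩ Γ) := measure_biUnion_le _ hcount _
      _ ≤ ∑' i : u, ENNReal.ofReal C * hm n d (ball (z i) (ρ i) ∩ Γ) :=
          ENNReal.tsum_le_tsum fun i => hpiece i i.2
      _ = ENNReal.ofReal C * hm n d (⋃ i ∈ u, ball (z i) (ρ i) ∩ Γ) := by
          rw [ENNReal.tsum_mul_left, measure_biUnion hcount
            (hdisj.mono fun i => inter_subset_left) fun i _ => measurableSet_ball.inter hΓm]
      _ ≤ _ := by
          gcongr
          exact iUnion₂_subset fun i hi η hη => mem_inter hη.2 (mem_iUnion₂.2 ⟨i, huV hi, hη.1⟩)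
  · push Not at hbdd
    have htop : hm n d (Γ ∩ ⋃ i ∈ V, ball (z i) (ρ i)) = ⊤ := by
      refine ENNReal.eq_top_of_forall_nnreal_le fun M => ?_
      obtain ⟨i, hi, hRi⟩ := hbdd ((A * M) ^ (1 / d))
      calc (M : ℝ≥0∞) = ENNReal.ofReal M := by simp
        _ ≤ ENNReal.ofReal (ρ i ^ d / A) := by
            refine ENNReal.ofReal_le_ofReal ?_
            have h := Real.rpow_le_rpow (by positivity) hRi.le hd.le
            rw [← Real.rpow_mul (by positivity), one_div_mul_cancel hd.ne', Real.rpow_one] at h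
            rw [le_div_iff₀ hA]
            linarith
        _ ≤ _ := hlow i hi
        _ ≤ _ := measure_mono fun η hη => mem_inter hη.2 (mem_iUnion₂.2 ⟨i, hi, hη.1⟩)
    rw [htop, ENNReal.mul_top (by simpa using hCpos)]
    exact le_top

/-- The points of `Ω` all of whose neighbourhoods meet `{|F| > t}` in positive measure. -/
def essLevel (Ω : Set (Euc n)) (F : Euc n → ℝ) (t : ℝ≥0∞) : Set (Euc n) :=
  {x | x ∈ Ω ∧ ∀ U ∈ 𝓝 x, volume (U ∩ {y | t < (‖F y‖₊ : ℝ≥0∞)}) ≠ 0}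

theorem continuous_bd (Ω : Set (Euc n)) : Continuous (bd Ω) := continuous_infDist_pt _

theorem isOpen_ntCone {Ω : Set (Euc n)} (hΩ : IsOpen Ω) (a : ℝ) (ξ : Euc n) :
    IsOpen (ntCone Ω a ξ) :=
  hΩ.inter (isOpen_lt (by fun_prop) (continuous_const.mul (continuous_bd Ω)))

theorem lt_ntMax_iff {Ω : Set (Euc n)} (hΩ : IsOpen Ω) {F : Euc n → ℝ} (hF : Measurable F)
    (a : ℝ) (ξ : Euc n) (t : ℝ≥0∞) :
    t < ntMax Ω a F ξ ↔ ∃ x ∈ essLevel Ω F t, dist x ξ < (1 + a) * bd Ω x := by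
  have hmeas : MeasurableSet {y | t < (‖F y‖₊ : ℝ≥0∞)} :=
    measurableSet_lt measurable_const hF.nnnorm.coe_nnreal_ennreal
  have hiff : t < ntMax Ω a F ξ ↔
      volume (ntCone Ω a ξ ∩ {y | t < (‖F y‖₊ : ℝ≥0∞)}) ≠ 0 := by
    rw [← not_iff_not, not_lt, not_not, inter_comm, ← Measure.restrict_apply hmeas]
    constructor
    · intro h
      have := ENNReal.ae_le_essSup (μ := volume.restrict (ntCone Ω a ξ))
        (fun x => (‖F x‖₊ : ℝ≥0∞))
      refine measure_mono_null (fun y hy => ?_) (ae_iff.1 this)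
      exact not_le.2 (h.trans_lt hy)
    · intro h
      refine essSup_le_of_ae_le _ ?_
      refine ae_iff.2 ?_
      simpa using h
  rw [hiff]
  constructor
  · intro h
    obtain ⟨x, ⟨hx, -⟩, hx'⟩ := exists_mem_forall_mem_nhdsWithin_pos_measure h
    refine ⟨x, ⟨hx.1, fun U hU => ?_⟩, hx.2⟩
    have := hx' (U ∩ (ntCone Ω a ξ ∩ {y | t < (‖F y‖₊ : ℝ≥0∞)}))
      (inter_mem (mem_nhdsWithin_of_mem_nhds hU) self_mem_nhdsWithin)
    exact (this.trans_le (measure_mono fun y hy => mem_inter hy.1 hy.2.2)).ne'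
  · rintro ⟨x, hx, hxξ⟩
    exact hx.2 _ ((isOpen_ntCone hΩ a ξ).mem_nhds ⟨hx.1, hxξ⟩)

theorem setOf_lt_ntMax {Ω : Set (Euc n)} (hΩ : IsOpen Ω) {F : Euc n → ℝ} (hF : Measurable F)
    (a : ℝ) (t : ℝ≥0∞) :
    {ξ | t < ntMax Ω a F ξ} = ⋃ x ∈ essLevel Ω F t, ball x ((1 + a) * bd Ω x) := by
  ext ξ
  simp [lt_ntMax_iff hΩ hF, dist_comm ξ]

theorem measurable_ntMax {Ω : Set (Euc n)} (hΩ : IsOpen Ω) {F : Euc n → ℝ} (hF : Measurable F)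
    (a : ℝ) : Measurable (ntMax Ω a F) := by
  refine measurable_of_Ioi fun t => ?_
  change MeasurableSet {ξ | t < ntMax Ω a F ξ}
  rw [setOf_lt_ntMax hΩ hF]
  exact (isOpen_biUnion fun _ _ => isOpen_ball).measurableSet

theorem ntMax_mono (Ω : Set (Euc n)) {a b : ℝ} (hab : a ≤ b) (F : Euc n → ℝ) (ξ : Euc n) :
    ntMax Ω a F ξ ≤ ntMax Ω b F ξ := by
  have hsub : ntCone Ω a ξ ⊆ ntCone Ω b ξ := fun x hx => by
    have : 0 ≤ bd Ω x := infDist_nonneg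
    exact ⟨hx.1, hx.2.trans_le (by gcongr)⟩
  exact essSup_mono_measure' (Measure.restrict_mono hsub le_rfl)

/-- Comparison of the level sets of nontangential maximal functions of different apertures. -/
theorem exists_hm_lt_ntMax_le (n : ℕ) {d A a b : ℝ} (hd : 0 < d) (hA : 0 < A) (ha : 0 < a)
    (hab : a < b) :
    ∃ C : ℝ, 0 < C ∧ ∀ Ω : Set (Euc n), IsOpen Ω → AhlforsRegular d A (frontier Ω) →
      ∀ F : Euc n → ℝ, Measurable F → ∀ t : ℝ≥0∞,
        hm n d (frontier Ω ∩ {ξ | t < ntMax Ω b F ξ}) ≤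
          ENNReal.ofReal C * hm n d (frontier Ω ∩ {ξ | t < ntMax Ω a F ξ}) := by
  obtain ⟨N, hN, hNup⟩ := exists_forall_hm_ball_inter_le n hd hA
  have hb : 0 < b := ha.trans hab
  set K : ℝ := 2 + (2 + b) / a with hKdef
  have hK : 0 < K := by positivity
  refine ⟨N * A * (3 + 2 * K) ^ d, by positivity, fun Ω hΩ hreg F hF t => ?_⟩
  set Γ := frontier Ω
  have hΓc : IsClosed Γ := isClosed_frontier
  rcases eq_or_ne (Metric.ediam Γ) 0 with h0 | h0
  · have hsub : (Γ ∩ {ξ | t < ntMax Ω b F ξ}).Subsingleton :=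
      (Metric.ediam_eq_zero_iff.1 h0).anti inter_subset_left
    have : NullSingletonClass (hm n d) := Measure.nullSingletonClass_hausdorff (Euc n) hd
    rw [hsub.measure_zero]
    exact zero_le
  have hbdpos : ∀ x ∈ Ω, 0 < bd Ω x := fun x hx =>
    (hΓc.notMem_iff_infDist_pos hreg.1).1 fun hxΓ => hΩ.inter_frontier_eq.subset ⟨hx, hxΓ⟩
  choose z hzΓ hz using fun x => hΓc.exists_infDist_eq_dist hreg.1 x
  let ρ : Euc n → ℝ := fun x =>
    if Metric.ediam Γ = ⊤ then a * bd Ω x else min (a * bd Ω x) (Metric.ediam Γ).toReal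
  have hρa : ∀ x, ρ x ≤ a * bd Ω x := by
    intro x
    by_cases h : Metric.ediam Γ = ⊤ <;> simp [ρ, h]
  have key := hm_inter_biUnion_ball_le hd hN hK hreg hΓc.measurableSet
    (hNup Γ hreg (pos_iff_ne_zero.2 h0)) (essLevel Ω F t) z ρ (fun x _ => hzΓ x)
    (fun x hx => ?_) (fun x _ => ?_)
  · rw [setOf_lt_ntMax hΩ hF, setOf_lt_ntMax hΩ hF]
    refine (measure_mono ?_).trans (key.trans (mul_le_mul_right (measure_mono ?_) _))
    · rintro ξ ⟨hξ, hξ'⟩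
      obtain ⟨x, hx, hxξ⟩ := mem_iUnion₂.1 hξ'
      refine ⟨hξ, mem_iUnion₂.2 ⟨x, hx, ?_⟩⟩
      have hpos := hbdpos x hx.1
      have hdist : dist ξ (z x) < (2 + b) * bd Ω x := by
        have h1 := dist_triangle ξ x (z x)
        have h2 : bd Ω x = dist x (z x) := hz x
        rw [mem_ball] at hxξ
        linarith
      have hcase : a * bd Ω x ≤ ρ x ∨ Metric.ediam Γ ≠ ⊤ ∧ (Metric.ediam Γ).toReal ≤ ρ x := by
        by_cases h : Metric.ediam Γ = ⊤
        · simp [ρ, h]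
        · simpa [ρ, h] using le_total _ _
      rw [mem_ball]
      rcases hcase with h | ⟨hne, h⟩
      · calc dist ξ (z x) < (2 + b) * bd Ω x := hdist
          _ = (2 + b) / a * (a * bd Ω x) := by field_simp
          _ ≤ (2 + b) / a * ρ x := by gcongr
          _ ≤ K * ρ x := by
            have : 0 ≤ ρ x := le_trans (by positivity) h
            rw [hKdef]; nlinarith
      · have hD : 0 < (Metric.ediam Γ).toReal := ENNReal.toReal_pos h0 hne
        have h1 : dist ξ (z x) ≤ (Metric.ediam Γ).toReal :=
          Metric.dist_le_diam_of_mem' hne hξ (hzΓ x)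
        have h2 : 0 < (2 + b) / a * ρ x := mul_pos (by positivity) (hD.trans_le h)
        rw [hKdef]; linarith
    · rintro ξ ⟨hξ, hξ'⟩
      obtain ⟨x, hx, hxξ⟩ := mem_iUnion₂.1 hξ'
      refine ⟨hξ, mem_iUnion₂.2 ⟨x, hx, ?_⟩⟩
      have h1 := dist_triangle ξ (z x) x
      have h2 : bd Ω x = dist x (z x) := hz x
      rw [mem_ball] at *
      rw [dist_comm (z x) x] at h1
      linarith [hρa x]
  · have hpos := mul_pos ha (hbdpos x hx.1)
    by_cases h : Metric.ediam Γ = ⊤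
    · simpa [ρ, h] using hpos
    · simpa [ρ, h] using ⟨hpos, ENNReal.toReal_pos h0 h⟩
  · by_cases h : Metric.ediam Γ = ⊤
    · simp [h]
    · calc ENNReal.ofReal (ρ x) ≤ ENNReal.ofReal (Metric.ediam Γ).toReal :=
          ENNReal.ofReal_le_ofReal (by simp [ρ, h])
        _ = _ := ENNReal.ofReal_toReal h

/-- A distributional inequality between two functions gives the same inequality between their
integrals. -/
theorem lintegral_le_of_meas_lt_le {α : Type*} [MeasurableSpace α] {μ : Measure α}
    {f g : α → ℝ≥0∞} (hf : Measurable f) (hg : Measurable g) {C : ℝ≥0∞} (hC0 : C ≠ 0)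
    (hC : C ≠ ⊤) (h : ∀ t : ℝ≥0∞, μ {x | t < g x} ≤ C * μ {x | t < f x}) :
    ∫⁻ x, g x ∂μ ≤ C * ∫⁻ x, f x ∂μ := by
  rcases eq_or_ne (∫⁻ x, f x ∂μ) ⊤ with hfi | hfi
  · simp [hfi, ENNReal.mul_top hC0]
  have hfin : ∀ᵐ x ∂μ, f x < ⊤ := ae_lt_top hf hfi
  have hgin : ∀ᵐ x ∂μ, g x < ⊤ := by
    have hle : ∀ k : ℕ, μ {x | ¬ g x < ⊤} ≤ C * ((∫⁻ x, f x ∂μ) / ((k + 1 : ℕ) : ℝ≥0∞)) := by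
      intro k
      calc μ {x | ¬ g x < ⊤} ≤ μ {x | ((k + 1 : ℕ) : ℝ≥0∞) < g x} := by
            refine measure_mono fun x hx => ?_
            have hx' : g x = ⊤ := by simpa using hx
            simp only [mem_ofPred_eq, hx']
            exact ENNReal.natCast_lt_top _
        _ ≤ C * μ {x | ((k + 1 : ℕ) : ℝ≥0∞) < f x} := h _
        _ ≤ _ := by
            refine mul_le_mul_right ((measure_mono fun x hx => ?_).trans
              (meas_ge_le_lintegral_div hf.aemeasurable (by simp) (ENNReal.natCast_ne_top _))) _
            exact (show _ < f x from hx).le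
    have hlim : Tendsto (fun k : ℕ => C * ((∫⁻ x, f x ∂μ) / ((k + 1 : ℕ) : ℝ≥0∞))) atTop (𝓝 0) := by
      have h1 := (ENNReal.tendsto_inv_nat_nhds_zero.comp (tendsto_add_atTop_nat 1))
      have h2 := ENNReal.Tendsto.const_mul (a := C * ∫⁻ x, f x ∂μ) h1
        (Or.inr (ENNReal.mul_ne_top hC hfi))
      simpa [div_eq_mul_inv, mul_assoc] using h2
    rw [ae_iff]
    exact le_antisymm (ge_of_tendsto' hlim hle) zero_le
  have layer : ∀ w : α → ℝ≥0∞, Measurable w → (∀ᵐ x ∂μ, w x < ⊤) →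
      ∫⁻ x, w x ∂μ = ∫⁻ s in Ioi (0 : ℝ), μ {x | ENNReal.ofReal s < w x} := by
    intro w hw hwin
    have h1 : ∫⁻ x, w x ∂μ = ∫⁻ x, ENNReal.ofReal (w x).toReal ∂μ :=
      lintegral_congr_ae (hwin.mono fun x hx => (ENNReal.ofReal_toReal hx.ne).symm)
    rw [h1, lintegral_eq_lintegral_meas_lt μ (ae_of_all _ fun x => ENNReal.toReal_nonneg)
      hw.ennreal_toReal.aemeasurable]
    refine setLIntegral_congr_fun measurableSet_Ioi fun s hs => measure_congr ?_
    filter_upwards [hwin] with x hx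
    exact propext (ENNReal.ofReal_lt_iff_lt_toReal (le_of_lt hs) hx.ne).symm
  rw [layer f hf hfin, layer g hg hgin, ← lintegral_const_mul' _ _ hC]
  exact lintegral_mono fun s => h _

theorem essSup_le_of_meas_lt_le {α : Type*} [MeasurableSpace α] {μ : Measure α}
    {f g : α → ℝ≥0∞} {C : ℝ≥0∞} (h : ∀ t : ℝ≥0∞, μ {x | t < g x} ≤ C * μ {x | t < f x}) :
    essSup g μ ≤ essSup f μ := by
  refine essSup_le_of_ae_le _ (ae_iff.2 ?_)
  have h0 : μ {x | essSup f μ < f x} = 0 := by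
    simpa using ae_iff.1 (ENNReal.ae_le_essSup (μ := μ) f)
  simpa [h0] using h (essSup f μ)

theorem lqNormE_mono {α : Type*} [MeasurableSpace α] (q : ℝ≥0∞) (μ : Measure α)
    {f g : α → ℝ≥0∞} (h : ∀ x, f x ≤ g x) : lqNormE q μ f ≤ lqNormE q μ g := by
  unfold lqNormE
  split_ifs
  · exact essSup_mono_ae (ae_of_all _ h)
  · gcongr with x
    exact h x

/-- A distributional inequality between two functions gives an inequality between their `L^q`
norms. -/
theorem lqNormE_le_of_meas_lt_le {α : Type*} [MeasurableSpace α] {μ : Measure α}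
    {f g : α → ℝ≥0∞} (hf : Measurable f) (hg : Measurable g) {C : ℝ} (hC : 0 < C) {q : ℝ≥0∞}
    (hq : 1 ≤ q) (h : ∀ t : ℝ≥0∞, μ {x | t < g x} ≤ ENNReal.ofReal C * μ {x | t < f x}) :
    lqNormE q μ g ≤ ENNReal.ofReal (C ^ (1 / q.toReal)) * lqNormE q μ f := by
  unfold lqNormE
  split_ifs with hqt
  · simpa [hqt] using essSup_le_of_meas_lt_le h
  · have hq0 : 0 < q.toReal := ENNReal.toReal_pos (zero_lt_one.trans_le hq).ne' hqt
    rw [← ENNReal.ofReal_rpow_of_pos hC, ← ENNReal.mul_rpow_of_nonneg _ _ (by positivity)]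
    refine ENNReal.rpow_le_rpow ?_ (by positivity)
    refine lintegral_le_of_meas_lt_le (hf.pow_const _) (hg.pow_const _) (by simpa using hC)
      ENNReal.ofReal_ne_top fun t => ?_
    simpa only [one_div, ENNReal.rpow_inv_lt_iff hq0] using h (t ^ (1 / q.toReal))

/-- change of aperture for the nontangential maximal function.
If `∂Ω` is `d`-Ahlfors regular and `0 < a < b`, then
`σ({N_b F > λ}) ≤ C σ({N_a F > λ})` and the `L^q(∂Ω,σ)` norms of `N_a F` and `N_b F`
are comparable. -/
theorem statement_4 (n : ℕ) (d A₀ a b : ℝ) (hd0 : 0 < d) (hdn : d < n)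
    (ha : 0 < a) (hab : a < b) :
    ∃ C : ℝ, 0 < C ∧
      ((∀ Ω : Set (Euc n), IsOpen Ω → AhlforsRegular d A₀ (frontier Ω) →
        ∀ F : Euc n → ℝ, Measurable F → ∀ lam : ℝ, 0 < lam →
          hm n d {ξ | ξ ∈ frontier Ω ∧ ENNReal.ofReal lam < ntMax Ω b F ξ} ≤
            ENNReal.ofReal C *
              hm n d {ξ | ξ ∈ frontier Ω ∧ ENNReal.ofReal lam < ntMax Ω a F ξ}) ∧
      ∀ q : ℝ≥0∞, 1 ≤ q → ∃ C' : ℝ, 0 < C' ∧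
        ∀ Ω : Set (Euc n), IsOpen Ω → AhlforsRegular d A₀ (frontier Ω) →
          ∀ F : Euc n → ℝ, Measurable F →
            lqNormE q ((hm n d).restrict (frontier Ω)) (ntMax Ω a F) ≤
                lqNormE q ((hm n d).restrict (frontier Ω)) (ntMax Ω b F) ∧
              lqNormE q ((hm n d).restrict (frontier Ω)) (ntMax Ω b F) ≤
                ENNReal.ofReal C' *
                  lqNormE q ((hm n d).restrict (frontier Ω)) (ntMax Ω a F)) := by
  by_cases hA : 0 < A₀
  · obtain ⟨C, hC, hlev⟩ := exists_hm_lt_ntMax_le n hd0 hA ha hab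
    refine ⟨C, hC, fun Ω hΩ hreg F hF lam _ => hlev Ω hΩ hreg F hF _, fun q hq =>
      ⟨C ^ (1 / q.toReal), by positivity, fun Ω hΩ hreg F hF =>
        ⟨lqNormE_mono q _ (ntMax_mono Ω hab.le F),
          lqNormE_le_of_meas_lt_le (measurable_ntMax hΩ hF a) (measurable_ntMax hΩ hF b) hC hq
            fun t => ?_⟩⟩⟩
    have hms : ∀ c, MeasurableSet {ξ | t < ntMax Ω c F ξ} := fun c =>
      measurableSet_lt measurable_const (measurable_ntMax hΩ hF c)
    rw [Measure.restrict_apply (hms b), Measure.restrict_apply (hms a), inter_comm,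
      inter_comm _ (frontier Ω)]
    exact hlev Ω hΩ hreg F hF t
  · exact ⟨1, one_pos, fun Ω _ hreg => absurd hreg.2.1 hA, fun q _ =>
      ⟨1, one_pos, fun Ω _ hreg => absurd hreg.2.1 hA⟩⟩

end Paper
end
end

section
/- Let 0 < d < n and let Ω ⊂ ℝⁿ be a nonempty proper open set whose boundary ∂Ω is d-Ahlfors regular with constant A. Let x ∈ ∂Ω, 0 < c < 1, and 0 ≤ ϱ < r < 2·diam ∂Ω. Set A₀ = Ω ∩ B(x,r) ∖ B(x,ϱ) and Ψ = Ω ∩ B(x, r/(1−c)) ∖ B(x, ϱ/(1+c)). Let ς, s ∈ ℝ and suppose either [1 ≤ β = p ≤ ∞ and ς ≤ s] or [1 ≤ β < p ≤ ∞ and ς < s]. Then for every F ∈ L^β_loc(Ω), (∫_{A₀} |F|^β δ^{d−n+β−βς})^{1/β} ≤ C·r^{d/β − d/p − ς + s}·‖F‖_{L^p_{av,c,β,s}(Ψ;Ω)}, provided the right-hand side is finite, where C depends only on A, n, d, c, β, p, s and ς. -/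
open MeasureTheory Metric Set Filter
open scoped ENNReal NNReal Topology RealInnerProductSpace

noncomputable section

namespace Paper

variable {n : ℕ}

/-- The weighted (unaveraged) `L^β` quantity `(∫_A |F|^β δ^{d-n+β-βς})^{1/β}` on `A ⊆ Ω`
(weighted essential supremum when `β = ∞`). -/
def wLb (Ω A : Set (Euc n)) (d : ℝ) (β : ℝ≥0∞) (ς : ℝ) (F : Euc n → ℝ) : ℝ≥0∞ :=
  if β = ⊤ then
    essSup (fun x => (‖F x‖₊ : ℝ≥0∞) * ENNReal.ofReal (bd Ω x) ^ (1 - ς))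
      (volume.restrict A)
  else
    (∫⁻ x in A, (‖F x‖₊ : ℝ≥0∞) ^ β.toReal *
        ENNReal.ofReal (bd Ω x) ^ (d - (n : ℝ) + β.toReal - β.toReal * ς)) ^ (1 / β.toReal)

theorem ofReal_rpow_le_of_comparable {a b K : ℝ} (e : ℝ) (ha : 0 < a) (hb : 0 < b) (hK : 1 ≤ K)
    (hab : a ≤ K * b) (hba : b ≤ K * a) :
    ENNReal.ofReal a ^ e ≤ ENNReal.ofReal K ^ |e| * ENNReal.ofReal b ^ e := by
  have hK0 : 0 < K := by linarith
  rw [ENNReal.ofReal_rpow_of_pos ha, ENNReal.ofReal_rpow_of_pos hb, ENNReal.ofReal_rpow_of_pos hK0,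
    ← ENNReal.ofReal_mul (by positivity)]
  refine ENNReal.ofReal_le_ofReal ?_
  rcases le_total 0 e with he | he
  · rw [abs_of_nonneg he, ← Real.mul_rpow hK0.le hb.le]
    exact Real.rpow_le_rpow ha.le hab he
  · rw [abs_of_nonpos he]
    have h1 : (K * a) ^ e ≤ b ^ e := Real.rpow_le_rpow_of_nonpos hb hba he
    rw [Real.mul_rpow hK0.le ha.le] at h1
    calc a ^ e = K ^ (-e) * (K ^ e * a ^ e) := by
          rw [← mul_assoc, ← Real.rpow_add hK0]; simp
      _ ≤ _ := by gcongr

theorem ofReal_rpow_ne_top {a : ℝ} (ha : 0 < a) (e : ℝ) : ENNReal.ofReal a ^ e ≠ ⊤ := by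
  rw [ENNReal.ofReal_rpow_of_pos ha]; exact ENNReal.ofReal_ne_top

theorem ofReal_rpow_add {a : ℝ} (ha : 0 < a) (e f : ℝ) :
    ENNReal.ofReal a ^ (e + f) = ENNReal.ofReal a ^ e * ENNReal.ofReal a ^ f :=
  ENNReal.rpow_add _ _ (by simpa using ha) ENNReal.ofReal_ne_top

theorem bd_le_dist {Ω : Set (Euc n)} {x : Euc n} (hx : x ∈ frontier Ω) (y : Euc n) :
    bd Ω y ≤ dist y x :=
  Metric.infDist_le_dist_of_mem hx

theorem bd_le_bd_add_dist (Ω : Set (Euc n)) (y z : Euc n) : bd Ω y ≤ bd Ω z + dist y z :=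
  Metric.infDist_le_infDist_add_dist

theorem bd_pos {Ω : Set (Euc n)} (hΩ : IsOpen Ω) (hne : (frontier Ω).Nonempty) {y : Euc n}
    (hy : y ∈ Ω) : 0 < bd Ω y := by
  refine (isClosed_frontier.notMem_iff_infDist_pos hne).1 fun h => ?_
  rw [hΩ.frontier_eq] at h
  exact h.2 hy

theorem ball_bd_subset {Ω : Set (Euc n)} (hΩ : IsOpen Ω) {y : Euc n} (hy : y ∈ Ω) :
    ball y (bd Ω y) ⊆ Ω := by
  intro z hz
  have hpos : 0 < bd Ω y := lt_of_le_of_lt dist_nonneg (mem_ball.1 hz)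
  refine (convex_ball y (bd Ω y)).isPreconnected.subset_of_closure_inter_subset hΩ
    ⟨y, mem_ball_self hpos, hy⟩ ?_ hz
  rintro w ⟨hw, hwb⟩
  by_contra hwΩ
  have : w ∈ frontier Ω := by rw [hΩ.frontier_eq]; exact ⟨hw, hwΩ⟩
  have h2 := bd_le_dist this y
  rw [mem_ball, dist_comm] at hwb
  linarith

theorem volume_ball_euc {r : ℝ} (y : Euc n) (hr : 0 < r) :
    volume (ball y r) = ENNReal.ofReal (r ^ n) * volume (ball (0 : Euc n) 1) := by
  have := Measure.addHaar_ball_of_pos (volume : Measure (Euc n)) y hr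
  rwa [finrank_euclideanSpace_fin] at this

/-- An upper Ahlfors bound extends to radii up to a fixed multiple of the diameter. -/
theorem exists_hm_ball_le (n : ℕ) {d A : ℝ} (hA : 0 < A) {L : ℝ} (hL : 1 ≤ L) :
    ∃ C : ℝ≥0∞, C ≠ ⊤ ∧ ∀ Γ : Set (Euc n), AhlforsRegular d A Γ → ∀ (x : Euc n) (ρ : ℝ), 0 < ρ →
      ENNReal.ofReal (ρ / L) ≤ Metric.ediam Γ →
        hm n d (ball x ρ ∩ Γ) ≤ C * ENNReal.ofReal ρ ^ d := by
  have hL0 : 0 < L := by linarith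
  obtain ⟨t, -, htf, ht⟩ := (isCompact_closedBall (0 : Euc n) 1).finite_cover_balls
    (e := 1 / (2 * L)) (by positivity)
  refine ⟨htf.toFinset.card * ENNReal.ofReal (A * L⁻¹ ^ d), by finiteness, ?_⟩
  intro Γ hΓ x ρ hρ hdiam
  have hsub : ball x ρ ∩ Γ ⊆ ⋃ a ∈ htf.toFinset, ball (x + ρ • a) (ρ / (2 * L)) ∩ Γ := by
    rintro y ⟨hy, hyΓ⟩
    have hy' : ρ⁻¹ • (y - x) ∈ closedBall (0 : Euc n) 1 := by
      rw [mem_closedBall_zero_iff, norm_smul, Real.norm_of_nonneg (by positivity)]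
      rw [mem_ball, dist_eq_norm] at hy
      rw [inv_mul_le_iff₀ hρ]; linarith
    obtain ⟨a, ha, hya⟩ := mem_iUnion₂.1 (ht hy')
    refine mem_iUnion₂.2 ⟨a, by simpa using ha, ?_, hyΓ⟩
    rw [mem_ball, dist_eq_norm] at hya ⊢
    have : y - (x + ρ • a) = ρ • (ρ⁻¹ • (y - x) - a) := by
      rw [smul_sub, smul_smul, mul_inv_cancel₀ hρ.ne', one_smul]; abel
    rw [this, norm_smul, Real.norm_of_nonneg hρ.le]
    calc _ < ρ * (1 / (2 * L)) := by gcongr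
      _ = _ := by ring
  have hpiece : ∀ a ∈ htf.toFinset, hm n d (ball (x + ρ • a) (ρ / (2 * L)) ∩ Γ) ≤
      ENNReal.ofReal (A * L⁻¹ ^ d) * ENNReal.ofReal ρ ^ d := by
    intro a _
    rcases (ball (x + ρ • a) (ρ / (2 * L)) ∩ Γ).eq_empty_or_nonempty with h | ⟨ξ, hξ, hξΓ⟩
    · simp [h]
    · calc _ ≤ hm n d (ball ξ (ρ / L) ∩ Γ) := by
            refine measure_mono (inter_subset_inter_left _ (ball_subset_ball' ?_))
            rw [mem_ball, dist_comm] at hξ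
            have : ρ / L = ρ / (2 * L) + ρ / (2 * L) := by field_simp; norm_num
            linarith
        _ ≤ _ := (hΓ.2.2 ξ hξΓ (ρ / L) (by positivity) hdiam).2
        _ = _ := by
            rw [ENNReal.ofReal_rpow_of_pos hρ, ← ENNReal.ofReal_mul (by positivity), mul_assoc,
              ← Real.mul_rpow (by positivity) hρ.le, div_eq_inv_mul]
  calc _ ≤ _ := measure_mono hsub
    _ ≤ ∑ a ∈ htf.toFinset, hm n d (ball (x + ρ • a) (ρ / (2 * L)) ∩ Γ) :=
        measure_biUnion_finset_le _ _
    _ ≤ _ := Finset.sum_le_card_nsmul _ _ _ hpiece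
    _ = _ := by rw [nsmul_eq_mul, mul_assoc]

/-- The radial integral `∫_{B(w,ρ)} |y-w|^{κ-n} dy` is `O(ρ^κ)`. -/
theorem exists_setLIntegral_dist_rpow_le (hn : 0 < n) {κ : ℝ} (hκ : 0 < κ) :
    ∃ C : ℝ≥0∞, C ≠ ⊤ ∧ ∀ (w : Euc n) (ρ : ℝ), 0 < ρ →
      ∫⁻ y in ball w ρ, ENNReal.ofReal (dist y w ^ (κ - n)) ≤ C * ENNReal.ofReal ρ ^ κ := by
  have hint : IntegrableOn (fun y : Euc n => ‖y‖ ^ (κ - n)) (ball 0 1) volume := by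
    refine integrableOn_ball_of_norm_le_rpow (C := 1) (α := n - κ)
      (by rw [finrank_euclideanSpace_fin]; omega)
      (by rw [finrank_euclideanSpace_fin]; linarith) ?_ ?_
    · refine Eventually.of_forall fun y => ?_
      rw [neg_sub, one_mul, Real.norm_of_nonneg (by positivity)]
    · exact (measurable_norm.pow_const _).aestronglyMeasurable
  refine ⟨∫⁻ y in ball (0 : Euc n) 1, ENNReal.ofReal (‖y‖ ^ (κ - n)), ?_, ?_⟩
  · have := hint.2
    rw [HasFiniteIntegral] at this
    refine (lt_of_le_of_lt (lintegral_mono fun y => ?_) this).ne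
    rw [Real.enorm_eq_ofReal (by positivity)]
  intro w ρ hρ
  have hmeas : Measurable fun y : Euc n => ENNReal.ofReal (‖y‖ ^ (κ - n)) := by fun_prop
  have h1 : ∫⁻ y in ball w ρ, ENNReal.ofReal (dist y w ^ (κ - n)) =
      ∫⁻ y in ball (0 : Euc n) ρ, ENNReal.ofReal (‖y‖ ^ (κ - n)) := by
    rw [← lintegral_indicator measurableSet_ball, ← lintegral_indicator measurableSet_ball,
      ← lintegral_add_right_eq_self _ w]
    refine lintegral_congr fun y => ?_
    simp only [indicator, mem_ball, dist_eq_norm, sub_zero, add_sub_cancel_right]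
  have h2 : ∫⁻ y in ball (0 : Euc n) 1, ENNReal.ofReal (‖ρ • y‖ ^ (κ - n)) =
      ENNReal.ofReal |(ρ ^ n)⁻¹| * ∫⁻ y in ball (0 : Euc n) ρ, ENNReal.ofReal (‖y‖ ^ (κ - n)) := by
    have hmap := Measure.map_addHaar_smul (volume : Measure (Euc n)) hρ.ne'
    rw [finrank_euclideanSpace_fin] at hmap
    rw [← smul_eq_mul, ← lintegral_smul_measure, ← Measure.restrict_smul, ← hmap,
      setLIntegral_map measurableSet_ball hmeas (measurable_const_smul ρ)]
    congr 2
    ext y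
    simp only [mem_preimage, mem_ball_zero_iff, norm_smul, Real.norm_of_nonneg hρ.le]
    constructor <;> intro h <;> nlinarith
  have h3 : ∫⁻ y in ball (0 : Euc n) 1, ENNReal.ofReal (‖ρ • y‖ ^ (κ - n)) =
      ENNReal.ofReal (ρ ^ (κ - n)) *
        ∫⁻ y in ball (0 : Euc n) 1, ENNReal.ofReal (‖y‖ ^ (κ - n)) := by
    rw [← lintegral_const_mul _ hmeas]
    refine lintegral_congr fun y => ?_
    rw [norm_smul, Real.norm_of_nonneg hρ.le, Real.mul_rpow hρ.le (norm_nonneg _),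
      ENNReal.ofReal_mul (by positivity)]
  rw [h1]
  have hone : ENNReal.ofReal (ρ ^ n) * ENNReal.ofReal |(ρ ^ n)⁻¹| = 1 := by
    rw [abs_of_pos (by positivity), ← ENNReal.ofReal_mul (by positivity),
      mul_inv_cancel₀ (by positivity), ENNReal.ofReal_one]
  refine le_of_eq ?_
  calc ∫⁻ y in ball (0 : Euc n) ρ, ENNReal.ofReal (‖y‖ ^ (κ - n))
      = ENNReal.ofReal (ρ ^ n) * (ENNReal.ofReal |(ρ ^ n)⁻¹| *
          ∫⁻ y in ball (0 : Euc n) ρ, ENNReal.ofReal (‖y‖ ^ (κ - n))) := by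
        rw [← mul_assoc, hone, one_mul]
    _ = ENNReal.ofReal (ρ ^ n) * ENNReal.ofReal (ρ ^ (κ - n)) *
          ∫⁻ y in ball (0 : Euc n) 1, ENNReal.ofReal (‖y‖ ^ (κ - n)) := by
        rw [← h2, h3, mul_assoc]
    _ = _ := by
        rw [mul_comm, ← ENNReal.ofReal_mul (by positivity), ← Real.rpow_natCast,
          ← Real.rpow_add hρ, ENNReal.ofReal_rpow_of_pos hρ]
        congr 3; ring

/-- `∫_{Ω ∩ B(x,R)} δ^{d-n+κ} = O(R^{d+κ})` for `κ > 0` when the boundary is Ahlfors regular. -/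
theorem exists_setLIntegral_bd_rpow_le (hn : 0 < n) {d A κ L : ℝ} (hA : 0 < A) (hκ : 0 < κ)
    (hL : 2 ≤ L) :
    ∃ C : ℝ≥0∞, C ≠ ⊤ ∧ ∀ Ω : Set (Euc n), IsOpen Ω → AhlforsRegular d A (frontier Ω) →
      ∀ x ∈ frontier Ω, ∀ R : ℝ, 0 < R → ENNReal.ofReal (R / L) ≤ Metric.ediam (frontier Ω) →
        ∫⁻ y in Ω ∩ ball x R, ENNReal.ofReal (bd Ω y) ^ (d - n + κ) ≤
          C * ENNReal.ofReal R ^ (d + κ) := by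
  have hL0 : 0 < L := by linarith
  obtain ⟨C₁, hC₁, H₁⟩ := exists_hm_ball_le n (d := d) hA (L := 3 * L) (by linarith)
  obtain ⟨C₂, hC₂, H₂⟩ := exists_setLIntegral_dist_rpow_le hn hκ
  set K₁ : ℝ≥0∞ := ENNReal.ofReal (A * L ^ d) with hK₁
  set K₂ : ℝ≥0∞ := ENNReal.ofReal 2 ^ |κ - n| with hK₂
  have hK₂t : K₂ ≠ ⊤ := ofReal_rpow_ne_top two_pos _
  refine ⟨K₁ * (K₂ * (C₂ * ENNReal.ofReal 2 ^ κ) * (C₁ * ENNReal.ofReal 3 ^ d)), ?_, ?_⟩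
  · have h2 := ofReal_rpow_ne_top two_pos κ
    have h3 := ofReal_rpow_ne_top three_pos d
    have : K₁ ≠ ⊤ := ENNReal.ofReal_ne_top
    finiteness
  intro Ω hΩ hΓ x hx R hR hdiam
  have hνle : hm n d (ball x (3 * R) ∩ frontier Ω) ≤ C₁ * ENNReal.ofReal (3 * R) ^ d :=
    H₁ _ hΓ x (3 * R) (by positivity) (by rwa [mul_div_mul_left _ _ three_ne_zero])
  set ν := (hm n d).restrict (ball x (3 * R) ∩ frontier Ω) with hν
  have hSm : MeasurableSet (ball x (3 * R) ∩ frontier Ω) :=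
    measurableSet_ball.inter isClosed_frontier.measurableSet
  have hνfin : IsFiniteMeasure ν := by
    refine ⟨?_⟩
    rw [hν, Measure.restrict_apply_univ]
    have := ofReal_rpow_ne_top (a := 3 * R) (by positivity) d
    exact lt_of_le_of_lt hνle (by finiteness)
  have hE : MeasurableSet (Ω ∩ ball x R) := hΩ.measurableSet.inter measurableSet_ball
  have hbm : Measurable (bd Ω) := (continuous_bd Ω).measurable
  set T : Set (Euc n × Euc n) := {q | dist q.2 q.1 < 2 * bd Ω q.1} with hT
  have hTm : MeasurableSet T :=
    measurableSet_lt (measurable_snd.dist measurable_fst) ((hbm.comp measurable_fst).const_mul 2)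
  set f : Euc n × Euc n → ℝ≥0∞ := T.indicator fun q => ENNReal.ofReal (bd Ω q.1) ^ (κ - n) with hf
  have hfm : Measurable f :=
    Measurable.indicator ((hbm.comp measurable_fst).ennreal_ofReal.pow_const _) hTm
  have hlow : ∀ y ∈ Ω ∩ ball x R,
      ENNReal.ofReal (bd Ω y) ^ (d - n + κ) ≤ K₁ * ∫⁻ w, f (y, w) ∂ν := by
    rintro y ⟨hyΩ, hyR⟩
    have hδ := bd_pos hΩ hΓ.1 hyΩ
    have hδR : bd Ω y < R := lt_of_le_of_lt (bd_le_dist hx y) hyR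
    obtain ⟨ξ, hξ, hyξ⟩ := (Metric.infDist_lt_iff (r := 3 / 2 * bd Ω y) hΓ.1).1
      (by change bd Ω y < _; linarith)
    have hδL : bd Ω y / L ≤ bd Ω y / 2 := by gcongr
    have hint : ∫⁻ w, f (y, w) ∂ν =
        ENNReal.ofReal (bd Ω y) ^ (κ - n) * ν (ball y (2 * bd Ω y)) := by
      rw [← lintegral_indicator_const measurableSet_ball]
      exact lintegral_congr fun w => by simp [hf, hT, indicator]
    have hball : ENNReal.ofReal ((bd Ω y / L) ^ d / A) ≤ ν (ball y (2 * bd Ω y)) := by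
      refine ((hΓ.2.2 ξ hξ (bd Ω y / L) (by positivity)
        (le_trans (ENNReal.ofReal_le_ofReal (by gcongr)) hdiam)).1).trans ?_
      rw [hν, Measure.restrict_apply measurableSet_ball]
      refine measure_mono fun w ⟨hw, hwΓ⟩ => ?_
      rw [mem_ball] at hw hyR
      have h1 : dist w y ≤ dist w ξ + dist y ξ := dist_triangle_right _ _ _
      have h2 := dist_triangle w y x
      exact ⟨by rw [mem_ball]; linarith, by rw [mem_ball]; linarith, hwΓ⟩
    have hK : ENNReal.ofReal (bd Ω y) ^ d = K₁ * ENNReal.ofReal ((bd Ω y / L) ^ d / A) := by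
      rw [hK₁, ← ENNReal.ofReal_mul (by positivity), ENNReal.ofReal_rpow_of_pos hδ,
        Real.div_rpow hδ.le hL0.le]
      congr 1
      field_simp
    rw [hint, show d - n + κ = d + (κ - n) by ring, ofReal_rpow_add hδ, hK]
    calc _ ≤ K₁ * ν (ball y (2 * bd Ω y)) * ENNReal.ofReal (bd Ω y) ^ (κ - n) := by gcongr
      _ = _ := by ring
  have hup : ∀ w ∈ ball x (3 * R) ∩ frontier Ω,
      ∫⁻ y in Ω ∩ ball x R, f (y, w) ≤ K₂ * (C₂ * ENNReal.ofReal (2 * R) ^ κ) := by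
    rintro w ⟨-, hwΓ⟩
    have hm' : Measurable fun y : Euc n => ENNReal.ofReal (dist y w ^ (κ - n)) := by fun_prop
    refine le_trans ?_ (mul_le_mul_right (H₂ w (2 * R) (by positivity)) K₂)
    rw [← lintegral_const_mul _ hm', ← lintegral_indicator hE, ← lintegral_indicator
      measurableSet_ball]
    refine lintegral_mono fun y => ?_
    by_cases hy : y ∈ Ω ∩ ball x R
    · rw [indicator_of_mem hy]
      by_cases hyw : (y, w) ∈ T
      · have hδ := bd_pos hΩ hΓ.1 hy.1
        have hδR : bd Ω y < R := lt_of_le_of_lt (bd_le_dist hx y) hy.2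
        have hle := bd_le_dist hwΓ y
        have hyw' : dist y w < 2 * bd Ω y := by rw [dist_comm]; exact hyw
        have hdp : 0 < dist y w := by linarith
        rw [indicator_of_mem (show y ∈ ball w (2 * R) by rw [mem_ball]; linarith), hf,
          indicator_of_mem hyw, ← ENNReal.ofReal_rpow_of_pos hdp]
        exact ofReal_rpow_le_of_comparable _ hδ hdp one_le_two (by linarith) hyw'.le
      · rw [hf, indicator_of_notMem hyw]; exact zero_le
    · rw [indicator_of_notMem hy]; exact zero_le
  calc ∫⁻ y in Ω ∩ ball x R, ENNReal.ofReal (bd Ω y) ^ (d - n + κ)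
      ≤ ∫⁻ y in Ω ∩ ball x R, K₁ * ∫⁻ w, f (y, w) ∂ν := setLIntegral_mono' hE hlow
    _ = K₁ * ∫⁻ w, ∫⁻ y in Ω ∩ ball x R, f (y, w) ∂volume ∂ν := by
        rw [lintegral_const_mul _ hfm.lintegral_prod_right', lintegral_lintegral_swap]
        exact hfm.aemeasurable
    _ ≤ K₁ * ∫⁻ _, K₂ * (C₂ * ENNReal.ofReal (2 * R) ^ κ) ∂ν := by
        gcongr 1
        exact setLIntegral_mono' hSm hup
    _ ≤ K₁ * (K₂ * (C₂ * ENNReal.ofReal (2 * R) ^ κ) * (C₁ * ENNReal.ofReal (3 * R) ^ d)) := by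
        rw [lintegral_const, hν, Measure.restrict_apply_univ]
        gcongr
    _ = _ := by
        rw [ENNReal.ofReal_mul zero_le_two, ENNReal.ofReal_mul zero_le_three,
          ENNReal.mul_rpow_of_ne_top ENNReal.ofReal_ne_top ENNReal.ofReal_ne_top,
          ENNReal.mul_rpow_of_ne_top ENNReal.ofReal_ne_top ENNReal.ofReal_ne_top,
          ofReal_rpow_add hR]
        ring

/-- The average of `g` over the Whitney ball `B(y, cδ(y))`. -/
def ballAvg (Ω : Set (Euc n)) (c : ℝ) (g : Euc n → ℝ≥0∞) (y : Euc n) : ℝ≥0∞ :=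
  (volume (ball y (c * bd Ω y)))⁻¹ * ∫⁻ z in ball y (c * bd Ω y), g z

theorem measurableSet_whitney (Ω : Set (Euc n)) (c : ℝ) :
    MeasurableSet {q : Euc n × Euc n | dist q.2 q.1 < c * bd Ω q.1} :=
  measurableSet_lt (measurable_snd.dist measurable_fst)
    (((continuous_bd Ω).measurable.comp measurable_fst).const_mul c)

theorem measurable_volume_whitney (Ω : Set (Euc n)) (c : ℝ) :
    Measurable fun y : Euc n => volume (ball y (c * bd Ω y)) :=
  measurable_measure_prodMk_left (measurableSet_whitney Ω c)

theorem measurable_ballAvg (Ω : Set (Euc n)) (c : ℝ) {g : Euc n → ℝ≥0∞} (hg : Measurable g) :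
    Measurable (ballAvg Ω c g) := by
  refine (measurable_volume_whitney Ω c).inv.mul ?_
  have h := ((hg.comp measurable_snd).indicator
    (measurableSet_whitney Ω c)).lintegral_prod_right' (ν := (volume : Measure (Euc n)))
  convert h using 2 with y
  rw [← lintegral_indicator measurableSet_ball]
  exact lintegral_congr fun z => by simp [indicator]

/-- Weighted integrals are controlled by weighted integrals of Whitney averages. -/
theorem setLIntegral_mul_bd_rpow_le {Ω : Set (Euc n)} (hΩ : IsOpen Ω)
    (hne : (frontier Ω).Nonempty) {c : ℝ} (hc : 0 < c) (hc1 : c < 1) (e : ℝ)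
    {g : Euc n → ℝ≥0∞} (hg : Measurable g) {S Ψ : Set (Euc n)} (hS : MeasurableSet S)
    (hSΩ : S ⊆ Ω)
    (hSΨ : ∀ z ∈ S, ball z (c / (1 + c) * bd Ω z) ⊆ Ψ) :
    ∫⁻ z in S, g z * ENNReal.ofReal (bd Ω z) ^ e ≤
      ENNReal.ofReal (4 ^ n) * ENNReal.ofReal 2 ^ |e| *
        ∫⁻ y in Ψ, ballAvg Ω c g y * ENNReal.ofReal (bd Ω y) ^ e := by
  set K : ℝ≥0∞ := ENNReal.ofReal (4 ^ n) * ENNReal.ofReal 2 ^ |e| with hK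
  set T : Set (Euc n × Euc n) := {q | dist q.2 q.1 < c * bd Ω q.1} with hT
  have hTm : MeasurableSet T := measurableSet_whitney Ω c
  have hbm : Measurable (bd Ω) := (continuous_bd Ω).measurable
  set u : Euc n → ℝ≥0∞ :=
    fun y => (volume (ball y (c * bd Ω y)))⁻¹ * ENNReal.ofReal (bd Ω y) ^ e with hu
  have hum : Measurable u :=
    (measurable_volume_whitney Ω c).inv.mul (hbm.ennreal_ofReal.pow_const _)
  set f : Euc n × Euc n → ℝ≥0∞ := T.indicator fun q => u q.1 * g q.2 with hf
  have hfm : Measurable f :=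
    ((hum.comp measurable_fst).mul (hg.comp measurable_snd)).indicator hTm
  have hc2 : c / (1 + c) < 1 / 2 := by rw [div_lt_div_iff₀ (by linarith) two_pos]; linarith
  have hc3 : 0 < c / (1 + c) := by positivity
  have hc4 : c / 2 < c / (1 + c) := by gcongr; linarith
  have hc5 : c / (1 + c) = c * (1 - c / (1 + c)) := by field_simp; ring
  have hlow : ∀ z ∈ S, ENNReal.ofReal (bd Ω z) ^ e ≤
      K * ∫⁻ y in ball z (c / (1 + c) * bd Ω z), u y := by
    intro z hz
    have hδ := bd_pos hΩ hne (hSΩ hz)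
    set ρ := c / (1 + c) * bd Ω z with hρ
    have hρ0 : 0 < ρ := by positivity
    have hV0 : volume (ball z ρ) ≠ 0 := (measure_ball_pos _ _ hρ0).ne'
    have hVt : volume (ball z ρ) ≠ ⊤ := measure_ball_lt_top.ne
    have hpt : ∀ y ∈ ball z ρ,
        (volume (ball z ρ))⁻¹ * ENNReal.ofReal (bd Ω z) ^ e ≤ K * u y := by
      intro y hy
      rw [mem_ball] at hy
      have h1 := bd_le_bd_add_dist Ω y z
      have h2 := bd_le_bd_add_dist Ω z y
      rw [dist_comm] at h2
      have hρh : ρ < 1 / 2 * bd Ω z := by rw [hρ]; gcongr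
      have hy0 : 0 < bd Ω y := by linarith
      have hw := ofReal_rpow_le_of_comparable e hδ hy0 one_le_two (by linarith) (by linarith)
      have hv : volume (ball y (c * bd Ω y)) ≤ ENNReal.ofReal (4 ^ n) * volume (ball z ρ) := by
        rw [volume_ball_euc y (by positivity), volume_ball_euc z hρ0, ← mul_assoc,
          ← ENNReal.ofReal_mul (by positivity), ← mul_pow]
        refine mul_le_mul_left
          (ENNReal.ofReal_le_ofReal (pow_le_pow_left₀ (by positivity) ?_ n)) _
        have : c / 2 * bd Ω z < ρ := by rw [hρ]; gcongr
        nlinarith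
      have hv' : (volume (ball z ρ))⁻¹ ≤
          ENNReal.ofReal (4 ^ n) * (volume (ball y (c * bd Ω y)))⁻¹ := by
        have h4 : ENNReal.ofReal (4 ^ n) ≠ 0 := by simp
        calc _ = ENNReal.ofReal (4 ^ n) * (ENNReal.ofReal (4 ^ n) * volume (ball z ρ))⁻¹ := by
              rw [ENNReal.mul_inv (.inl h4) (.inl ENNReal.ofReal_ne_top), ← mul_assoc,
                ENNReal.mul_inv_cancel h4 ENNReal.ofReal_ne_top, one_mul]
          _ ≤ _ := by gcongr
      calc _ ≤ (ENNReal.ofReal (4 ^ n) * (volume (ball y (c * bd Ω y)))⁻¹) *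
            (ENNReal.ofReal 2 ^ |e| * ENNReal.ofReal (bd Ω y) ^ e) := by gcongr
        _ = _ := by rw [hK, hu]; ring
    calc ENNReal.ofReal (bd Ω z) ^ e
        = ∫⁻ _ in ball z ρ, (volume (ball z ρ))⁻¹ * ENNReal.ofReal (bd Ω z) ^ e := by
          rw [setLIntegral_const, mul_right_comm, ENNReal.inv_mul_cancel hV0 hVt, one_mul]
      _ ≤ ∫⁻ y in ball z ρ, K * u y := setLIntegral_mono' measurableSet_ball hpt
      _ = _ := lintegral_const_mul _ hum
  have hinner : ∀ z ∈ S, g z * ENNReal.ofReal (bd Ω z) ^ e ≤ K * ∫⁻ y in Ψ, f (y, z) := by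
    intro z hz
    calc _ ≤ g z * (K * ∫⁻ y in ball z (c / (1 + c) * bd Ω z), u y) := by
          gcongr; exact hlow z hz
      _ = K * ∫⁻ y in ball z (c / (1 + c) * bd Ω z), u y * g z := by
          rw [lintegral_mul_const _ hum]; ring
      _ ≤ K * ∫⁻ y in ball z (c / (1 + c) * bd Ω z), f (y, z) := by
          gcongr 1
          refine setLIntegral_mono' measurableSet_ball fun y hy => ?_
          rw [mem_ball] at hy
          have h2 := bd_le_bd_add_dist Ω z y
          have hδ := bd_pos hΩ hne (hSΩ hz)
          have hyz : (y, z) ∈ T := by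
            simp only [hT, mem_ofPred_eq]
            rw [dist_comm] at hy
            calc dist z y < c / (1 + c) * bd Ω z := hy
              _ = c * (bd Ω z - c / (1 + c) * bd Ω z) := by
                rw [← one_sub_mul, ← mul_assoc, ← hc5]
              _ ≤ _ := by gcongr; linarith
          rw [hf, indicator_of_mem hyz]
      _ ≤ _ := by
          gcongr 1
          exact lintegral_mono_set (hSΨ z hz)
  have hfub : ∀ y, ∫⁻ z, f (y, z) = ballAvg Ω c g y * ENNReal.ofReal (bd Ω y) ^ e := by
    intro y
    calc _ = ∫⁻ z in ball y (c * bd Ω y), u y * g z := by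
          rw [← lintegral_indicator measurableSet_ball]
          exact lintegral_congr fun z => by simp [hf, hT, indicator]
      _ = _ := by rw [lintegral_const_mul _ hg, hu, ballAvg]; ring
  calc _ ≤ ∫⁻ z in S, K * ∫⁻ y in Ψ, f (y, z) := setLIntegral_mono' hS hinner
    _ ≤ ∫⁻ z, K * ∫⁻ y in Ψ, f (y, z) := setLIntegral_le_lintegral _ _
    _ = K * ∫⁻ z, ∫⁻ y in Ψ, f (y, z) := lintegral_const_mul _ hfm.lintegral_prod_left'
    _ = K * ∫⁻ y in Ψ, ∫⁻ z, f (y, z) := by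
        rw [lintegral_lintegral_swap]
        exact (hfm.comp measurable_swap).aemeasurable
    _ = _ := by simp_rw [hfub]

/-- Small Whitney balls centered in an annulus stay in the enlarged annulus. -/
theorem ball_subset_annulus {Ω : Set (Euc n)} (hΩ : IsOpen Ω) {x : Euc n} (hx : x ∈ frontier Ω)
    {c ϱ r : ℝ} (hc : 0 < c) (hc1 : c < 1) {z : Euc n} (hz : z ∈ (Ω ∩ ball x r) \ ball x ϱ) :
    ball z (c / (1 + c) * bd Ω z) ⊆
      (Ω ∩ ball x (r / (1 - c))) \ ball x (ϱ / (1 + c)) := by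
  obtain ⟨⟨hzΩ, hzr⟩, hzϱ⟩ := hz
  have hδ := bd_pos hΩ ⟨x, hx⟩ hzΩ
  have hle := bd_le_dist hx z
  have hd1 : c / (1 + c) < 1 := by rw [div_lt_one (by linarith)]; linarith
  have hd0 : 0 < c / (1 + c) := by positivity
  rw [mem_ball] at hzr hzϱ
  intro y hy
  rw [mem_ball] at hy
  have hy' : dist y z < c / (1 + c) * dist z x := lt_of_lt_of_le hy (by gcongr)
  have hr : 0 < r := lt_of_le_of_lt dist_nonneg hzr
  refine ⟨⟨ball_bd_subset hΩ hzΩ (mem_ball.2 (by nlinarith)), ?_⟩, ?_⟩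
  · rw [mem_ball]
    have h1 := dist_triangle y z x
    have h2 : (1 + c / (1 + c)) ≤ 1 / (1 - c) := by
      rw [le_div_iff₀ (by linarith)]
      have : c / (1 + c) ≤ c := div_le_self hc.le (by linarith)
      nlinarith
    calc dist y x < (1 + c / (1 + c)) * r := by nlinarith
      _ ≤ 1 / (1 - c) * r := by gcongr
      _ = _ := by ring
  · rw [mem_ball, not_lt]
    have h1 := dist_triangle_left z x y
    have h2 : 1 - c / (1 + c) = 1 / (1 + c) := by field_simp; ring
    have h3 : dist z x ≥ ϱ := not_lt.1 hzϱ
    calc ϱ / (1 + c) = 1 / (1 + c) * ϱ := by ring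
      _ ≤ (1 - c / (1 + c)) * dist z x := by rw [h2]; gcongr
      _ ≤ _ := by linarith

theorem wAvg_rpow_eq_ballAvg {Ω : Set (Euc n)} (hΩ : IsOpen Ω) {c : ℝ} (hc1 : c < 1)
    {β : ℝ≥0∞} (hβ0 : β ≠ 0) (hβ : β ≠ ⊤) {F : Euc n → ℝ} {g : Euc n → ℝ≥0∞}
    (hg : (fun z => ‖F z‖ₑ ^ β.toReal) =ᵐ[volume.restrict Ω] g) {y : Euc n} (hy : y ∈ Ω) :
    wAvg Ω c β F y ^ β.toReal = ballAvg Ω c g y := by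
  have hb : β.toReal ≠ 0 := (ENNReal.toReal_pos hβ0 hβ).ne'
  have hsub : ball y (c * bd Ω y) ⊆ Ω := by
    refine (ball_subset_ball ?_).trans (ball_bd_subset hΩ hy)
    nlinarith [show 0 ≤ bd Ω y from Metric.infDist_nonneg]
  rw [wAvg, eLpNorm_eq_lintegral_rpow_enorm_toReal hβ0 hβ, ← ENNReal.rpow_mul,
    one_div_mul_cancel hb, ENNReal.rpow_one, lintegral_smul_measure, smul_eq_mul, ballAvg]
  congr 1
  exact lintegral_congr_ae (ae_restrict_of_ae_restrict_of_subset hsub hg)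

/-- Comparison of the weighted `L^β` quantity with Whitney averages, without change of exponent. -/
theorem wLb_le_setLIntegral_wAvg {Ω : Set (Euc n)} (hΩ : IsOpen Ω)
    (hne : (frontier Ω).Nonempty) {c : ℝ} (hc : 0 < c) (hc1 : c < 1) {β : ℝ≥0∞} (hβ0 : β ≠ 0)
    (hβ : β ≠ ⊤) (d ς : ℝ) {F : Euc n → ℝ} (hF : AEStronglyMeasurable F (volume.restrict Ω))
    {S Ψ : Set (Euc n)} (hS : MeasurableSet S) (hSΩ : S ⊆ Ω) (hΨ : MeasurableSet Ψ) (hΨΩ : Ψ ⊆ Ω)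
    (hSΨ : ∀ z ∈ S, ball z (c / (1 + c) * bd Ω z) ⊆ Ψ) :
    AEMeasurable (wAvg Ω c β F) (volume.restrict Ψ) ∧
      wLb Ω S d β ς F ≤
        (ENNReal.ofReal (4 ^ n) * ENNReal.ofReal 2 ^ |d - n + β.toReal - β.toReal * ς| *
          ∫⁻ y in Ψ, wAvg Ω c β F y ^ β.toReal *
            ENNReal.ofReal (bd Ω y) ^ (d - n + β.toReal - β.toReal * ς)) ^ (1 / β.toReal) := by
  have hb : 0 < β.toReal := ENNReal.toReal_pos hβ0 hβ
  obtain ⟨g, hg, hFg⟩ := hF.enorm.pow_const β.toReal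
  have hW : ∀ y ∈ Ψ, wAvg Ω c β F y ^ β.toReal = ballAvg Ω c g y :=
    fun y hy => wAvg_rpow_eq_ballAvg hΩ hc1 hβ0 hβ hFg (hΨΩ hy)
  refine ⟨?_, ?_⟩
  · refine ((measurable_ballAvg Ω c hg).pow_const (1 / β.toReal)).aemeasurable.congr ?_
    filter_upwards [ae_restrict_mem hΨ] with y hy
    rw [← hW y hy, ← ENNReal.rpow_mul, mul_one_div_cancel hb.ne', ENNReal.rpow_one]
  · rw [wLb, if_neg hβ]
    gcongr ?_ ^ _
    have h1 : ∫⁻ z in S, (‖F z‖₊ : ℝ≥0∞) ^ β.toReal *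
          ENNReal.ofReal (bd Ω z) ^ (d - n + β.toReal - β.toReal * ς) =
        ∫⁻ z in S, g z * ENNReal.ofReal (bd Ω z) ^ (d - n + β.toReal - β.toReal * ς) := by
      refine lintegral_congr_ae ?_
      filter_upwards [ae_restrict_of_ae_restrict_of_subset hSΩ hFg] with z hz
      rw [← hz]; rfl
    have h2 : ∫⁻ y in Ψ, wAvg Ω c β F y ^ β.toReal *
          ENNReal.ofReal (bd Ω y) ^ (d - n + β.toReal - β.toReal * ς) =
        ∫⁻ y in Ψ, ballAvg Ω c g y *
          ENNReal.ofReal (bd Ω y) ^ (d - n + β.toReal - β.toReal * ς) :=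
      setLIntegral_congr_fun hΨ fun y hy => by simp only [hW y hy]
    rw [h1, h2]
    exact setLIntegral_mul_bd_rpow_le hΩ hne hc hc1 _ hg hS hSΩ hSΨ

/-- Lowering the smoothness exponent at fixed integrability. -/
theorem setLIntegral_wAvg_le_of_eq {Ω Ψ : Set (Euc n)} {W : Euc n → ℝ≥0∞} {R b ς s : ℝ} (d : ℝ)
    (hb : 0 < b) (hςs : ς ≤ s) (hΨ : MeasurableSet Ψ) (hpos : ∀ y ∈ Ψ, 0 < bd Ω y)
    (hR : ∀ y ∈ Ψ, bd Ω y ≤ R) :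
    ∫⁻ y in Ψ, W y ^ b * ENNReal.ofReal (bd Ω y) ^ (d - n + b - b * ς) ≤
      ENNReal.ofReal R ^ (b * (s - ς)) *
        ∫⁻ y in Ψ, W y ^ b * ENNReal.ofReal (bd Ω y) ^ (d - n + b - b * s) := by
  have hexp : 0 ≤ b * (s - ς) := mul_nonneg hb.le (by linarith)
  have ht : ENNReal.ofReal R ^ (b * (s - ς)) ≠ ⊤ :=
    ENNReal.rpow_ne_top_of_nonneg hexp ENNReal.ofReal_ne_top
  rw [← lintegral_const_mul' _ _ ht]
  refine setLIntegral_mono' hΨ fun y hy => ?_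
  rw [show d - n + b - b * ς = b * (s - ς) + (d - n + b - b * s) by ring,
    ofReal_rpow_add (hpos y hy), mul_left_comm]
  gcongr
  exact hR y hy

/-- Lowering the integrability exponent from `q` to `b` by the Hölder inequality. -/
theorem setLIntegral_wAvg_le_of_lt {Ω Ψ : Set (Euc n)} {W : Euc n → ℝ≥0∞} {b q : ℝ} (d ς s : ℝ)
    (hb : 0 < b) (hbq : b < q) (hΨ : MeasurableSet Ψ) (hpos : ∀ y ∈ Ψ, 0 < bd Ω y)
    (hW : AEMeasurable W (volume.restrict Ψ)) :
    ∫⁻ y in Ψ, W y ^ b * ENNReal.ofReal (bd Ω y) ^ (d - n + b - b * ς) ≤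
      (∫⁻ y in Ψ, W y ^ q * ENNReal.ofReal (bd Ω y) ^ (d - n + q - q * s)) ^ (b / q) *
        (∫⁻ y in Ψ, ENNReal.ofReal (bd Ω y) ^ (d - n + b * (s - ς) / (1 - b / q))) ^
          (1 - b / q) := by
  have hq : 0 < q := hb.trans hbq
  have hbq1 : b / q < 1 := (div_lt_one hq).2 hbq
  have hbq0 : 0 < 1 - b / q := by linarith
  have hconj : (q / b).HolderConjugate (1 - b / q)⁻¹ := by
    rw [Real.holderConjugate_iff]
    exact ⟨(one_lt_div hb).2 hbq, by rw [inv_inv, inv_div]; ring⟩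
  have hbm : Measurable fun y : Euc n => ENNReal.ofReal (bd Ω y) :=
    (continuous_bd Ω).measurable.ennreal_ofReal
  have hH := ENNReal.lintegral_mul_le_Lp_mul_Lq (volume.restrict Ψ) hconj
    (f := fun y => W y ^ b * ENNReal.ofReal (bd Ω y) ^ ((d - n + q - q * s) * (b / q)))
    (g := fun y => ENNReal.ofReal (bd Ω y) ^
      ((d - n + b * (s - ς) / (1 - b / q)) * (1 - b / q)))
    ((hW.pow_const _).mul (hbm.pow_const _).aemeasurable) (hbm.pow_const _).aemeasurable
  convert hH using 1
  · refine setLIntegral_congr_fun hΨ fun y hy => ?_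
    simp only [Pi.mul_apply]
    rw [mul_assoc, ← ofReal_rpow_add (hpos y hy)]
    congr 2
    rw [add_mul _ (b * (s - ς) / (1 - b / q)), div_mul_cancel₀ _ hbq0.ne']
    field_simp
    ring
  · congr 1
    · rw [one_div_div]
      congr 1
      refine lintegral_congr fun y => ?_
      have h1 : b / q * (q / b) = 1 := by field_simp
      rw [ENNReal.mul_rpow_of_nonneg _ _ (by positivity), ← ENNReal.rpow_mul, ← ENNReal.rpow_mul,
        mul_div_cancel₀ _ hb.ne', mul_assoc, h1, mul_one]
    · rw [one_div, inv_inv]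
      congr 1
      refine lintegral_congr fun y => ?_
      rw [← ENNReal.rpow_mul, mul_assoc, mul_inv_cancel₀ hbq0.ne', mul_one]

/-- Lowering the integrability exponent from `∞` to `b`. -/
theorem setLIntegral_wAvg_le_of_top {Ω Ψ : Set (Euc n)} {W : Euc n → ℝ≥0∞} {b : ℝ} (d ς s : ℝ)
    (hb : 0 < b) (hΨ : MeasurableSet Ψ) (hpos : ∀ y ∈ Ψ, 0 < bd Ω y) :
    ∫⁻ y in Ψ, W y ^ b * ENNReal.ofReal (bd Ω y) ^ (d - n + b - b * ς) ≤
      (⨆ y ∈ Ψ, W y * ENNReal.ofReal (bd Ω y) ^ (1 - s)) ^ b *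
        ∫⁻ y in Ψ, ENNReal.ofReal (bd Ω y) ^ (d - n + b * (s - ς)) := by
  rw [← lintegral_const_mul _ ((continuous_bd Ω).measurable.ennreal_ofReal.pow_const _)]
  refine setLIntegral_mono' hΨ fun y hy => ?_
  calc _ = (W y * ENNReal.ofReal (bd Ω y) ^ (1 - s)) ^ b *
        ENNReal.ofReal (bd Ω y) ^ (d - n + b * (s - ς)) := by
        rw [ENNReal.mul_rpow_of_nonneg _ _ hb.le, mul_assoc, ← ENNReal.rpow_mul,
          ← ofReal_rpow_add (hpos y hy)]
        congr 2
        ring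
    _ ≤ _ := by
        gcongr
        exact le_iSup₂ (f := fun y (_ : y ∈ Ψ) => W y * ENNReal.ofReal (bd Ω y) ^ (1 - s)) y hy

theorem exists_setLIntegral_wAvg_le {d A c ς s : ℝ} {β p : ℝ≥0∞} (hn : 0 < n) (hA : 0 < A)
    (hc : 0 < c) (hc1 : c < 1) (hβ : 1 ≤ β) (hβt : β ≠ ⊤)
    (hcase : (β = p ∧ ς ≤ s) ∨ (β < p ∧ ς < s)) :
    ∃ C : ℝ≥0∞, C ≠ ⊤ ∧ ∀ Ω : Set (Euc n), IsOpen Ω → AhlforsRegular d A (frontier Ω) →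
      ∀ x ∈ frontier Ω, ∀ r : ℝ, 0 < r → ENNReal.ofReal r < 2 * Metric.ediam (frontier Ω) →
        ∀ Ψ ⊆ Ω ∩ ball x (r / (1 - c)), MeasurableSet Ψ → ∀ F : Euc n → ℝ,
          AEMeasurable (wAvg Ω c β F) (volume.restrict Ψ) →
            ∫⁻ y in Ψ, wAvg Ω c β F y ^ β.toReal *
                ENNReal.ofReal (bd Ω y) ^ (d - n + β.toReal - β.toReal * ς) ≤
              C * ENNReal.ofReal (r / (1 - c)) ^
                  (β.toReal * (d / β.toReal - d / p.toReal - ς + s)) *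
                avNormOn Ω Ψ d c β p s F ^ β.toReal := by
  set b := β.toReal with hb_def
  have hb : 0 < b := ENNReal.toReal_pos (one_pos.trans_le hβ).ne' hβt
  have hdiam : ∀ (Ω : Set (Euc n)) (r : ℝ), 0 < r →
      ENNReal.ofReal r < 2 * Metric.ediam (frontier Ω) →
      ENNReal.ofReal (r / (1 - c) / (2 / (1 - c))) ≤ Metric.ediam (frontier Ω) := by
    intro Ω r hr h
    have hc' : (1 - c) ≠ 0 := by linarith
    rw [div_div_div_cancel_right₀ hc', ENNReal.ofReal_div_of_pos two_pos]
    refine ENNReal.div_le_of_le_mul' ?_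
    simpa using h.le
  have hL : 2 ≤ 2 / (1 - c) := by
    rw [le_div_iff₀ (by linarith)]; linarith
  rcases hcase with ⟨rfl, hςs⟩ | ⟨hβp, hςs⟩
  · refine ⟨1, ENNReal.one_ne_top, ?_⟩
    intro Ω hΩ hΓ x hx r hr _ Ψ hΨ hΨm F _
    rw [avNormOn, if_neg hβt, ← hb_def, ← ENNReal.rpow_mul, one_div_mul_cancel hb.ne',
      ENNReal.rpow_one, one_mul, show b * (d / b - d / b - ς + s) = b * (s - ς) by ring]
    exact setLIntegral_wAvg_le_of_eq d hb hςs hΨm (fun y hy => bd_pos hΩ hΓ.1 (hΨ hy).1)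
      (fun y hy => (bd_le_dist hx y).trans (mem_ball.1 (hΨ hy).2).le)
  · rcases eq_or_ne p ⊤ with rfl | hpt
    · obtain ⟨C, hC, H⟩ := exists_setLIntegral_bd_rpow_le hn (d := d) hA
        (κ := b * (s - ς)) (mul_pos hb (by linarith)) hL
      refine ⟨C, hC, ?_⟩
      intro Ω hΩ hΓ x hx r hr hrd Ψ hΨ hΨm F _
      refine (setLIntegral_wAvg_le_of_top d ς s hb hΨm
        (fun y hy => bd_pos hΩ hΓ.1 (hΨ hy).1)).trans ?_
      rw [avNormOn, if_pos rfl, mul_comm, ENNReal.toReal_top, div_zero,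
        show b * (d / b - 0 - ς + s) = d + b * (s - ς) by field_simp; ring]
      gcongr
      exact (lintegral_mono_set hΨ).trans
        (H Ω hΩ hΓ x hx _ (div_pos hr (by linarith)) (hdiam Ω r hr hrd))
    · set q := p.toReal with hq_def
      have hbq : b < q := (ENNReal.toReal_lt_toReal hβt hpt).2 hβp
      have hq : 0 < q := hb.trans hbq
      have hbq0 : 0 < 1 - b / q := by have := (div_lt_one hq).2 hbq; linarith
      obtain ⟨C, hC, H⟩ := exists_setLIntegral_bd_rpow_le hn (d := d) hA
        (κ := b * (s - ς) / (1 - b / q)) (div_pos (mul_pos hb (by linarith)) hbq0) hL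
      refine ⟨C ^ (1 - b / q), ENNReal.rpow_ne_top_of_nonneg hbq0.le hC, ?_⟩
      intro Ω hΩ hΓ x hx r hr hrd Ψ hΨ hΨm F hW
      refine (setLIntegral_wAvg_le_of_lt d ς s hb hbq hΨm
        (fun y hy => bd_pos hΩ hΓ.1 (hΨ hy).1) hW).trans ?_
      have hexp : b * (d / b - d / q - ς + s) =
          (d + b * (s - ς) / (1 - b / q)) * (1 - b / q) := by
        rw [add_mul, div_mul_cancel₀ _ hbq0.ne']
        field_simp
        ring
      rw [avNormOn, if_neg hpt, ← hq_def, ← ENNReal.rpow_mul, one_div_mul_eq_div, mul_comm, hexp,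
        ENNReal.rpow_mul, ← ENNReal.mul_rpow_of_nonneg _ _ hbq0.le]
      gcongr
      exact (lintegral_mono_set hΨ).trans
        (H Ω hΩ hΓ x hx _ (div_pos hr (by linarith)) (hdiam Ω r hr hrd))

theorem enorm_ae_le_wAvg_top {Ω : Set (Euc n)} {c : ℝ} {F : Euc n → ℝ} (y : Euc n) :
    ∀ᵐ w, w ∈ ball y (c * bd Ω y) → ‖F w‖ₑ ≤ wAvg Ω c ⊤ F y := by
  rw [← ae_restrict_iff' measurableSet_ball]
  have h : (volume (ball y (c * bd Ω y)))⁻¹ ≠ 0 := ENNReal.inv_ne_zero.2 measure_ball_lt_top.ne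
  rw [← Measure.ae_ennreal_smul_measure_eq h, wAvg, eLpNorm_exponent_top]
  exact enorm_ae_le_eLpNormEssSup _ _

/-- The endpoint case `β = p = ∞`. -/
theorem wLb_top_le {Ω : Set (Euc n)} (hΩ : IsOpen Ω) {x : Euc n} (hx : x ∈ frontier Ω)
    {c r : ℝ} (hc : 0 < c) (hc1 : c < 1) {ς s : ℝ} (hςs : ς ≤ s) (d : ℝ)
    {F : Euc n → ℝ} {S Ψ : Set (Euc n)} (hS : MeasurableSet S) (hSΩ : S ⊆ Ω ∩ ball x r)
    (hSΨ : S ⊆ Ψ) :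
    wLb Ω S d ⊤ ς F ≤
      ENNReal.ofReal 2 ^ |1 - s| * ENNReal.ofReal r ^ (s - ς) * avNormOn Ω Ψ d c ⊤ ⊤ s F := by
  rw [wLb, if_pos rfl, avNormOn, if_pos rfl]
  have hpos : ∀ z ∈ S, 0 < bd Ω z := fun z hz => bd_pos hΩ ⟨x, hx⟩ (hSΩ hz).1
  have hc2 : c / (1 + c) < 1 / 2 := by rw [div_lt_div_iff₀ (by linarith) two_pos]; linarith
  have hcc : c / (1 + c) ≤ c := div_le_self hc.le (by linarith)
  obtain ⟨t, htS, htc, hcov⟩ := TopologicalSpace.countable_cover_nhdsWithin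
    (f := fun z => ball z (c / (1 + c) * bd Ω z)) (s := S) fun z hz =>
      mem_nhdsWithin_of_mem_nhds (ball_mem_nhds z (mul_pos (by positivity) (hpos z hz)))
  have hae : ∀ᵐ w, ∀ z ∈ t, w ∈ ball z (c * bd Ω z) → ‖F w‖ₑ ≤ wAvg Ω c ⊤ F z :=
    (ae_ball_iff htc).2 fun z _ => enorm_ae_le_wAvg_top z
  refine essSup_le_of_ae_le _ ?_
  rw [EventuallyLE, ae_restrict_iff' hS]
  filter_upwards [hae] with w hw hwS
  obtain ⟨z, hzt, hwz⟩ := mem_iUnion₂.1 (hcov hwS)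
  have hδw := hpos w hwS
  have hδz := hpos z (htS hzt)
  have hFw : ‖F w‖ₑ ≤ wAvg Ω c ⊤ F z := hw z hzt (ball_subset_ball (by gcongr) hwz)
  have hwr : bd Ω w ≤ r := (bd_le_dist hx w).trans (mem_ball.1 (hSΩ hwS).2).le
  rw [mem_ball] at hwz
  have hhalf : c / (1 + c) * bd Ω z < 1 / 2 * bd Ω z := by gcongr
  have h1 := bd_le_bd_add_dist Ω w z
  have h2 := bd_le_bd_add_dist Ω z w
  rw [dist_comm] at h2
  have hcomp := ofReal_rpow_le_of_comparable (1 - s) hδw hδz one_le_two (by linarith)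
    (by linarith)
  calc ‖F w‖ₑ * ENNReal.ofReal (bd Ω w) ^ (1 - ς)
      = ‖F w‖ₑ * (ENNReal.ofReal (bd Ω w) ^ (1 - s) * ENNReal.ofReal (bd Ω w) ^ (s - ς)) := by
        rw [← ofReal_rpow_add hδw]; congr 2; ring
    _ ≤ wAvg Ω c ⊤ F z * (ENNReal.ofReal 2 ^ |1 - s| * ENNReal.ofReal (bd Ω z) ^ (1 - s) *
          ENNReal.ofReal r ^ (s - ς)) := by
        gcongr
    _ = ENNReal.ofReal 2 ^ |1 - s| * ENNReal.ofReal r ^ (s - ς) *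
          (wAvg Ω c ⊤ F z * ENNReal.ofReal (bd Ω z) ^ (1 - s)) := by ring
    _ ≤ _ := by
        gcongr
        exact le_iSup₂ (f := fun y (_ : y ∈ Ψ) =>
          wAvg Ω c ⊤ F y * ENNReal.ofReal (bd Ω y) ^ (1 - s)) z (hSΨ (htS hzt))

theorem exists_wLb_le {d A c ς s : ℝ} {β p : ℝ≥0∞} (hn : 0 < n) (hA : 0 < A)
    (hc : 0 < c) (hc1 : c < 1) (hβ : 1 ≤ β)
    (hcase : (β = p ∧ ς ≤ s) ∨ (β < p ∧ ς < s)) :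
    ∃ C : ℝ≥0∞, C ≠ ⊤ ∧ ∀ Ω : Set (Euc n), IsOpen Ω → AhlforsRegular d A (frontier Ω) →
      ∀ x ∈ frontier Ω, ∀ ϱ r : ℝ, 0 < r →
        ENNReal.ofReal r < 2 * Metric.ediam (frontier Ω) → ∀ F : Euc n → ℝ,
          AEStronglyMeasurable F (volume.restrict Ω) →
            wLb Ω ((Ω ∩ ball x r) \ ball x ϱ) d β ς F ≤
              C * ENNReal.ofReal r ^ (d / β.toReal - d / p.toReal - ς + s) *
                avNormOn Ω ((Ω ∩ ball x (r / (1 - c))) \ ball x (ϱ / (1 + c))) d c β p s F := by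
  have hSm : ∀ (Ω : Set (Euc n)), IsOpen Ω → ∀ (x : Euc n) (ϱ r : ℝ),
      MeasurableSet ((Ω ∩ ball x r) \ ball x ϱ) := fun Ω hΩ x ϱ r =>
    (hΩ.measurableSet.inter measurableSet_ball).diff measurableSet_ball
  rcases eq_or_ne β ⊤ with rfl | hβt
  · obtain ⟨rfl, hςs⟩ : ⊤ = p ∧ ς ≤ s := hcase.resolve_right fun h => not_top_lt h.1
    refine ⟨ENNReal.ofReal 2 ^ |1 - s|, ofReal_rpow_ne_top two_pos _, ?_⟩
    intro Ω hΩ hΓ x hx ϱ r hr _ F _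
    rw [sub_self, zero_sub, neg_add_eq_sub]
    refine wLb_top_le hΩ hx hc hc1 hςs d (hSm Ω hΩ x ϱ r) sdiff_subset fun z hz => ?_
    refine ball_subset_annulus hΩ hx hc hc1 hz (mem_ball_self ?_)
    exact mul_pos (by positivity) (bd_pos hΩ ⟨x, hx⟩ hz.1.1)
  · have hβ0 : β ≠ 0 := (one_pos.trans_le hβ).ne'
    have hb : 0 < β.toReal := ENNReal.toReal_pos hβ0 hβt
    have hb1 : 0 ≤ 1 / β.toReal := by positivity
    have hc' : 0 < 1 - c := by linarith
    obtain ⟨C, hC, H⟩ := exists_setLIntegral_wAvg_le (d := d) hn hA hc hc1 hβ hβt hcase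
    set E := d / β.toReal - d / p.toReal - ς + s with hE
    set K : ℝ≥0∞ :=
      ENNReal.ofReal (4 ^ n) * ENNReal.ofReal 2 ^ |d - n + β.toReal - β.toReal * ς| with hK
    have hKt : K ≠ ⊤ := ENNReal.mul_ne_top ENNReal.ofReal_ne_top (ofReal_rpow_ne_top two_pos _)
    have hct : ENNReal.ofReal (1 / (1 - c)) ^ E ≠ ⊤ := ofReal_rpow_ne_top (by positivity) _
    refine ⟨(K * C) ^ (1 / β.toReal) * ENNReal.ofReal (1 / (1 - c)) ^ E,
      ENNReal.mul_ne_top (ENNReal.rpow_ne_top_of_nonneg hb1 (ENNReal.mul_ne_top hKt hC)) hct, ?_⟩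
    intro Ω hΩ hΓ x hx ϱ r hr hrd F hF
    obtain ⟨hW, hle⟩ := wLb_le_setLIntegral_wAvg hΩ hΓ.1 hc hc1 hβ0 hβt d ς hF (hSm Ω hΩ x ϱ r)
      (fun z hz => hz.1.1) (hSm Ω hΩ x (ϱ / (1 + c)) (r / (1 - c))) (fun z hz => hz.1.1)
      (fun z hz => ball_subset_annulus hΩ hx hc hc1 hz)
    refine hle.trans ?_
    have h2 := H Ω hΩ hΓ x hx r hr hrd _ sdiff_subset
      (hSm Ω hΩ x (ϱ / (1 + c)) (r / (1 - c))) F hW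
    set N := avNormOn Ω ((Ω ∩ ball x (r / (1 - c))) \ ball x (ϱ / (1 + c))) d c β p s F
    calc _ ≤ (K * (C * ENNReal.ofReal (r / (1 - c)) ^ (β.toReal * E) * N ^ β.toReal)) ^
          (1 / β.toReal) := by gcongr
      _ = (K * C) ^ (1 / β.toReal) * ENNReal.ofReal (r / (1 - c)) ^ E * N := by
        rw [← mul_assoc, ← mul_assoc, ENNReal.mul_rpow_of_nonneg _ _ hb1,
          ENNReal.mul_rpow_of_nonneg _ _ hb1, ← ENNReal.rpow_mul, ← ENNReal.rpow_mul,
          mul_one_div_cancel hb.ne', mul_right_comm β.toReal, mul_one_div_cancel hb.ne', one_mul,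
          ENNReal.rpow_one]
      _ = _ := by
        rw [show r / (1 - c) = 1 / (1 - c) * r by ring, ENNReal.ofReal_mul (by positivity),
          ENNReal.mul_rpow_of_ne_top ENNReal.ofReal_ne_top ENNReal.ofReal_ne_top]
        ring

/-- Lemma: from averaged to unaveraged bounds near the boundary. -/
theorem statement_10 (n : ℕ) (d A₀ c ς s : ℝ) (β p : ℝ≥0∞)
    (hd0 : 0 < d) (hdn : d < n) (hc : 0 < c) (hc1 : c < 1)
    (hcase : (1 ≤ β ∧ β = p ∧ ς ≤ s) ∨ (1 ≤ β ∧ β < p ∧ ς < s)) :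
    ∃ C : ℝ, 0 < C ∧
      ∀ Ω : Set (Euc n), IsOpen Ω → Ω.Nonempty → Ω ≠ Set.univ →
        AhlforsRegular d A₀ (frontier Ω) →
        ∀ x ∈ frontier Ω, ∀ ϱ r : ℝ, 0 ≤ ϱ → ϱ < r →
          ENNReal.ofReal r < 2 * EMetric.diam (frontier Ω) →
          ∀ F : Euc n → ℝ, MemLLoc Ω β F →
            avNormOn Ω ((Ω ∩ Metric.ball x (r / (1 - c))) \ Metric.ball x (ϱ / (1 + c)))
                d c β p s F < ⊤ →
            wLb Ω ((Ω ∩ Metric.ball x r) \ Metric.ball x ϱ) d β ς F ≤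
              ENNReal.ofReal (C * r ^ (d / β.toReal - d / p.toReal - ς + s)) *
                avNormOn Ω ((Ω ∩ Metric.ball x (r / (1 - c))) \ Metric.ball x (ϱ / (1 + c)))
                  d c β p s F := by
  have hn : 0 < n := by exact_mod_cast hd0.trans hdn
  rcases le_or_gt A₀ 0 with hA | hA
  · exact ⟨1, one_pos, fun _ _ _ _ hΓ => absurd hΓ.2.1 hA.not_gt⟩
  have hβ : 1 ≤ β := hcase.elim (fun h => h.1) fun h => h.1
  obtain ⟨C, hC, H⟩ := exists_wLb_le (d := d) hn hA hc hc1 hβ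
    (hcase.imp (fun h => h.2) fun h => h.2)
  refine ⟨C.toReal + 1, by positivity, ?_⟩
  intro Ω hΩ _ _ hΓ x hx ϱ r hϱ hϱr hrd F hF _
  have hr : 0 < r := hϱ.trans_lt hϱr
  refine (H Ω hΩ hΓ x hx ϱ r hr hrd F hF.1).trans ?_
  rw [ENNReal.ofReal_mul (by positivity), ENNReal.ofReal_rpow_of_pos hr]
  gcongr
  exact (ENNReal.ofReal_toReal hC).symm.trans_le (ENNReal.ofReal_le_ofReal (by linarith))

end Paper
end
end
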